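/- arXiv:math/0201154 — 2 statements merged into one kernel-verified Lean document; each statement's English description precedes it below -/
import Mathlib

section
/- Let p be a rational prime, let c := e/(e−1), and let L be a degree-d field extension of ℚ_p. Let f ∈ L[x] be nonzero. If σ_L(f) ≤ 1, then f has at most 1 + d·p·(p^d−1)/(p−1) distinct roots in L; and if σ_L(f) ≤ 2, then f has at most 1 + d·p·(p^d−1)/(p−1) + (4c·d·p·(p^d−1)²/(p−1))·(1 + d·log_p(2d/log p)) distinct roots in L. -/
open Polynomial Real

/-- `f` admits a presentation of additive complexity `s` over `L`. -/
def HasAddComplexityPres {L : Type*} [Field L] (f : L[X]) (s : ℕ) : Prop :=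
  ∃ (c d : ℕ → L) (m m' : ℕ → ℕ → ℕ) (Xs : ℕ → L[X]),
    Xs 0 = X ∧
    (∀ j, 1 ≤ j → j ≤ s →
      Xs j = C (c j) * ∏ i ∈ Finset.range j, Xs i ^ m i j
           + C (d j) * ∏ i ∈ Finset.range j, Xs i ^ m' i j) ∧
    f = C (c (s+1)) * ∏ i ∈ Finset.range (s+1), Xs i ^ m i (s+1)

/-- The additive complexity `σ_L(f)`: the least `s` admitting such a presentation. -/
noncomputable def addComplexity {L : Type*} [Field L] (f : L[X]) : ℕ :=
  sInf {s | HasAddComplexityPres f s}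

/-!
Additive complexity at most two confines the nonzero roots of `f` to those of a binomial
`g = c x ^ m + d x ^ n` and of a polynomial `c' x ^ k g ^ l + d' x ^ k' g ^ l'`. Where `x` and `g`
do not vanish, the latter equation reads `(x ^ u g ^ v) ^ e = κ` with `u` and `v` coprime. So
`w = x ^ u g ^ v` takes at most as many values as a binomial has nonzero roots, and a monomial
change of coordinates on the torus turns the relation `g(x) = c x ^ m + d x ^ n` on a fibre of `w`
into a trinomial equation in one variable.

A polynomial with `k + 1` terms has roots of at most `k` different norms, the slopes of its Newton
polygon, and the roots of a given norm lie in at most `p ^ d - 1` residue discs. In such a disc the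
quotients of roots of a binomial are roots of unity congruent to `1`, hence of `p`-power order, and
the value of the cyclotomic polynomial at `1` bounds that order. For a trinomial, expanded at a
point of the disc, the coefficients of degree at least two are bounded by the first two up to a
quadratic factor in the degree. Hence the last index attaining the Gauss norm at radius
`p ^ (-1 / d)`, which bounds the number of roots, is small.
-/

lemma card_le_mul_of_card_fiber_le {α β : Type*} [DecidableEq β] {s : Finset α} {f : α → β}
    {M B : ℝ} (hM : ((s.image f).card : ℝ) ≤ M) (hB0 : 0 ≤ B)
    (hB : ∀ a ∈ s, ((s.filter (f · = f a)).card : ℝ) ≤ B) : (s.card : ℝ) ≤ M * B := by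
  have hfiber : ∀ b ∈ s.image f, ((s.filter (f · = b)).card : ℝ) ≤ B :=
    Finset.forall_mem_image.mpr hB
  calc (s.card : ℝ) = ∑ b ∈ s.image f, ((s.filter (f · = b)).card : ℝ) := by
        exact_mod_cast Finset.card_eq_sum_card_image f s
    _ ≤ (s.image f).card * B := by simpa using Finset.sum_le_card_nsmul _ _ B hfiber
    _ ≤ M * B := by gcongr

section NonzeroRoots

variable {F : Type*} [Field F]

open Classical in
/-- The set of distinct nonzero roots of `f`. It is empty for `f = 0`, so that the degenerate
polynomials arising from a presentation contribute no roots. -/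
noncomputable def nonzeroRoots (f : F[X]) : Finset F := f.roots.toFinset.erase 0

lemma mem_nonzeroRoots {f : F[X]} {x : F} :
    x ∈ nonzeroRoots f ↔ x ≠ 0 ∧ f ≠ 0 ∧ f.eval x = 0 := by
  simp [nonzeroRoots]

lemma ncard_setOf_eval_eq_zero_le {f : F[X]} (hf : f ≠ 0) :
    {x | f.eval x = 0}.ncard ≤ (nonzeroRoots f).card + 1 := by
  classical
  have hroots : {x | f.eval x = 0} = f.roots.toFinset := by ext; simp [hf]
  rw [hroots, Set.ncard_coe_finset, nonzeroRoots]
  exact Nat.sub_le_iff_le_add.mp Finset.pred_card_le_card_erase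

lemma exists_mem_nonzeroRoots_of_mem_C_mul_prod_pow {ι : Type*} {s : Finset ι} {c : F}
    {g : ι → F[X]} {m : ι → ℕ} {x : F} (hx : x ∈ nonzeroRoots (C c * ∏ i ∈ s, g i ^ m i)) :
    ∃ i ∈ s, x ∈ nonzeroRoots (g i) := by
  obtain ⟨hx0, hne, heval⟩ := mem_nonzeroRoots.mp hx
  rw [mul_ne_zero_iff, C_ne_zero, Finset.prod_ne_zero_iff] at hne
  rw [eval_C_mul, eval_prod, mul_eq_zero, or_iff_right hne.1, Finset.prod_eq_zero_iff] at heval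
  obtain ⟨i, hi, hzero⟩ := heval
  rw [eval_pow, pow_eq_zero_iff'] at hzero
  exact ⟨i, hi, mem_nonzeroRoots.mpr ⟨hx0, (pow_ne_zero_iff hzero.2).mp (hne.2 i hi), hzero.1⟩⟩

lemma eval_add_eq_zero_iff_eval_div_eval_eq {c d : F} {u v : F[X]} {x : F} (hc : c ≠ 0)
    (hv : v.eval x ≠ 0) :
    (C c * u + C d * v).eval x = 0 ↔ u.eval x / v.eval x = -d / c := by
  rw [div_eq_div_iff hv hc, eval_add, eval_C_mul, eval_C_mul, add_eq_zero_iff_eq_neg, neg_mul,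
    mul_comm c]

lemma ne_of_mem_nonzeroRoots_add {c d : F} {u v : F[X]} {x : F}
    (hx : x ∈ nonzeroRoots (C c * u + C d * v)) (hu : u.eval x ≠ 0) (hv : v.eval x ≠ 0) :
    u ≠ v ∧ c ≠ 0 := by
  obtain ⟨-, hne, heval⟩ := mem_nonzeroRoots.mp hx
  simp only [eval_add, eval_C_mul] at heval
  constructor
  · rintro rfl
    rw [← add_mul, mul_eq_zero, or_iff_left hu] at heval
    rw [← add_mul, ← C_add, heval, C_0, zero_mul] at hne
    exact hne rfl
  · rintro rfl
    simp_all

end NonzeroRoots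

section Presentation

variable {F : Type*} [Field F]

lemma exists_hasAddComplexityPres (f : F[X]) : ∃ s, HasAddComplexityPres f s := by
  -- For `j ≥ 1` the polynomial `X_j` is the sum of the terms of `f` of degree less than `j`.
  refine ⟨f.natDegree + 1, fun j ↦ if j = 1 then 0 else 1, fun j ↦ f.coeff (j - 1),
    fun i j ↦ if i = j - 1 then 1 else 0, fun i j ↦ if i = 0 then j - 1 else 0,
    fun j ↦ if j = 0 then X else ∑ i ∈ Finset.range j, C (f.coeff i) * X ^ i, rfl, ?_, ?_⟩
  · intro j hj _
    obtain ⟨k, rfl⟩ := Nat.exists_eq_add_of_le' hj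
    rcases k with _ | k
    · simp
    · simp [Finset.sum_range_succ, pow_ite, Finset.prod_ite_eq', ite_pow]
  · simp [← as_sum_range_C_mul_X_pow]

lemma hasAddComplexityPres_addComplexity (f : F[X]) : HasAddComplexityPres f (addComplexity f) :=
  Nat.sInf_mem (exists_hasAddComplexityPres f)

lemma HasAddComplexityPres.exists_nonzeroRoots_subset_of_le_one {f : F[X]} {s : ℕ}
    (hf : HasAddComplexityPres f s) (hs : s ≤ 1) :
    ∃ (c d : F) (m n : ℕ), nonzeroRoots f ⊆ nonzeroRoots (C c * X ^ m + C d * X ^ n) := by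
  obtain ⟨c, d, m, n, Xs, h0, hstep, rfl⟩ := hf
  refine ⟨c 1, d 1, m 0 1, n 0 1, fun x hx ↦ ?_⟩
  obtain ⟨j, hj, hxj⟩ := exists_mem_nonzeroRoots_of_mem_C_mul_prod_pow hx
  rw [Finset.mem_range_succ_iff] at hj
  have hj1 : j ≤ 1 := hj.trans hs
  interval_cases j
  · simp [h0, mem_nonzeroRoots] at hxj
  · simpa [hstep 1 le_rfl hj, h0] using hxj

lemma HasAddComplexityPres.exists_mem_nonzeroRoots_or_of_le_two {f : F[X]} {s : ℕ}
    (hf : HasAddComplexityPres f s) (hs : s ≤ 2) :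
    ∃ g : F[X], (∃ (c d : F) (m n : ℕ), g = C c * X ^ m + C d * X ^ n) ∧
      ∃ (c d : F) (k l k' l' : ℕ), ∀ x ∈ nonzeroRoots f, x ∈ nonzeroRoots g ∨
        x ∈ nonzeroRoots (C c * (X ^ k * g ^ l) + C d * (X ^ k' * g ^ l')) := by
  obtain ⟨c, d, m, n, Xs, h0, hstep, rfl⟩ := hf
  refine ⟨_, ⟨c 1, d 1, m 0 1, n 0 1, rfl⟩, c 2, d 2, m 0 2, m 1 2, n 0 2, n 1 2, fun x hx ↦ ?_⟩
  obtain ⟨j, hj, hxj⟩ := exists_mem_nonzeroRoots_of_mem_C_mul_prod_pow hx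
  rw [Finset.mem_range_succ_iff] at hj
  have hj2 : j ≤ 2 := hj.trans hs
  interval_cases j
  · simp [h0, mem_nonzeroRoots] at hxj
  · left
    simpa [hstep 1 le_rfl hj, h0] using hxj
  · right
    simpa [hstep 2 one_le_two hj, hstep 1 le_rfl (one_le_two.trans hj), h0,
      Finset.prod_range_succ] using hxj

end Presentation

section DominantIndex

variable {L : Type*} [NormedField L] {g : L[X]} {r : ℝ} {i j : ℕ}

/-- The index `i` attains the Gauss norm `max_k ‖g_k‖ r ^ k` of `g` at radius `r`: these are the
indices supporting the edge or vertex of the Newton polygon of `g` with slope `log r`. -/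
def IsDominantIndex (g : L[X]) (r : ℝ) (i : ℕ) : Prop :=
  ∀ k, ‖g.coeff k‖ * r ^ k ≤ ‖g.coeff i‖ * r ^ i

/-- The index `i` is the largest one attaining the Gauss norm of `g` at radius `r`. -/
def IsLastDominantIndex (g : L[X]) (r : ℝ) (i : ℕ) : Prop :=
  IsDominantIndex g r i ∧ ∀ k, i < k → ‖g.coeff k‖ * r ^ k < ‖g.coeff i‖ * r ^ i

lemma IsDominantIndex.pos (hg : g ≠ 0) (hr : 0 < r) (hi : IsDominantIndex g r i) :
    0 < ‖g.coeff i‖ * r ^ i := by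
  have hlead : 0 < ‖g.leadingCoeff‖ := norm_pos_iff.mpr (leadingCoeff_ne_zero.mpr hg)
  exact (by positivity : 0 < ‖g.leadingCoeff‖ * r ^ g.natDegree).trans_le (hi g.natDegree)

lemma IsDominantIndex.coeff_ne_zero (hg : g ≠ 0) (hr : 0 < r) (hi : IsDominantIndex g r i) :
    g.coeff i ≠ 0 :=
  norm_ne_zero_iff.mp (left_ne_zero_of_mul (hi.pos hg hr).ne')

lemma IsLastDominantIndex.le (hi : IsLastDominantIndex g r i) (hj : IsDominantIndex g r j) :
    j ≤ i :=
  not_lt.mp fun hij ↦ (hi.2 j hij).not_ge (hj i)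

lemma exists_isDominantIndex (g : L[X]) (hr : 0 ≤ r) : ∃ i, IsDominantIndex g r i := by
  obtain ⟨i, -, hi⟩ := Finset.exists_max_image (Finset.range (g.natDegree + 1))
    (fun k ↦ ‖g.coeff k‖ * r ^ k) (by simp)
  refine ⟨i, fun k ↦ ?_⟩
  by_cases hk : k ≤ g.natDegree
  · exact hi k (Finset.mem_range_succ_iff.mpr hk)
  · rw [coeff_eq_zero_of_natDegree_lt (not_le.mp hk), norm_zero, zero_mul]
    positivity

lemma exists_isLastDominantIndex (hg : g ≠ 0) (hr : 0 < r) : ∃ i, IsLastDominantIndex g r i := by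
  classical
  obtain ⟨i₀, hi₀⟩ := exists_isDominantIndex g hr.le
  have hle : ∀ i, IsDominantIndex g r i → i ≤ g.natDegree :=
    fun i hi ↦ le_natDegree_of_ne_zero (hi.coeff_ne_zero hg hr)
  have hlast : IsDominantIndex g r (Nat.findGreatest (IsDominantIndex g r) g.natDegree) :=
    Nat.findGreatest_spec (hle i₀ hi₀) hi₀
  refine ⟨_, hlast, fun k hk ↦ (hlast k).lt_of_ne fun heq ↦ hk.not_ge ?_⟩
  have hdom : IsDominantIndex g r k := fun l ↦ (hlast l).trans_eq heq.symm
  exact Nat.le_findGreatest (hle k hdom) hdom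

lemma isLastDominantIndex_X_sub_C {a : L} (hr : 0 < r) (ha : ‖a‖ ≤ r) :
    IsLastDominantIndex (X - C a) r 1 := by
  constructor
  · rintro (_ | _ | k) <;> simp [coeff_X, coeff_C, ha, hr.le]
  · rintro (_ | _ | k) hk <;> simp_all [coeff_X]

lemma IsDominantIndex.le_of_lt {r' : ℝ} (hg : g ≠ 0) (hr : 0 < r) (hrr' : r < r')
    (hi : IsDominantIndex g r i) (hj : IsDominantIndex g r' j) : i ≤ j := by
  by_contra! hji
  obtain ⟨k, rfl⟩ := Nat.exists_eq_add_of_lt hji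
  have hr' : 0 < r' := hr.trans hrr'
  have hcoeff : 0 < ‖g.coeff (j + k + 1)‖ := norm_pos_iff.mpr (hi.coeff_ne_zero hg hr)
  have hle : ‖g.coeff j‖ ≤ ‖g.coeff (j + k + 1)‖ * r ^ (k + 1) :=
    le_of_mul_le_mul_right ((hi j).trans_eq (by ring)) (pow_pos hr j)
  have hge : ‖g.coeff (j + k + 1)‖ * r' ^ (k + 1) ≤ ‖g.coeff j‖ :=
    le_of_mul_le_mul_right ((hj (j + k + 1)).trans_eq' (by ring)) (pow_pos hr' j)
  have hpow : r ^ (k + 1) < r' ^ (k + 1) := pow_lt_pow_left₀ hrr' hr.le k.succ_ne_zero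
  exact ((hge.trans hle).trans_lt (mul_lt_mul_of_pos_left hpow hcoeff)).false

end DominantIndex

section Ultrametric

variable {L : Type*} [NormedField L] [IsUltrametricDist L] {f g : L[X]} {r : ℝ} {i j : ℕ}

lemma exists_isDominantIndex_lt_isDominantIndex {x : L} (hx : x ∈ nonzeroRoots g) :
    ∃ i j, i < j ∧ IsDominantIndex g ‖x‖ i ∧ IsDominantIndex g ‖x‖ j := by
  obtain ⟨hx0, hg, hroot⟩ := mem_nonzeroRoots.mp hx
  have hxpos : 0 < ‖x‖ := norm_pos_iff.mpr hx0
  obtain ⟨i, hi⟩ := exists_isDominantIndex g hxpos.le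
  suffices ∃ j, j ≠ i ∧ IsDominantIndex g ‖x‖ j by
    obtain ⟨j, hji, hj⟩ := this
    rcases hji.lt_or_gt with hlt | hlt
    exacts [⟨j, i, hlt, hj, hi⟩, ⟨i, j, hlt, hi, hj⟩]
  by_contra! hunique
  have hstrict : ∀ k ∈ g.support, k ≠ i → ‖g.coeff k * x ^ k‖ < ‖g.coeff i * x ^ i‖ := by
    intro k _ hk
    obtain ⟨l, hl⟩ := not_forall.mp (hunique k hk)
    simpa only [norm_mul, norm_pow] using (not_le.mp hl).trans_le (hi l)
  have hnorm : ‖g.eval x‖ = ‖g.coeff i * x ^ i‖ := by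
    rw [eval_eq_sum, sum_def]
    exact IsUltrametricDist.isNonarchimedean_norm.apply_sum_eq_of_lt (fun a ↦ (norm_neg a).symm)
      (mem_support_iff.mpr (hi.coeff_ne_zero hg hxpos)) hstrict
  rw [hroot, norm_zero, norm_mul, norm_pow] at hnorm
  exact (hi.pos hg hxpos).ne hnorm

-- Each norm is a slope of the Newton polygon of `g`; send it to the right endpoint of its edge.
lemma card_image_norm_nonzeroRoots_lt_card_support (hg : g ≠ 0) :
    ((nonzeroRoots g).image norm).card < g.support.card := by
  classical
  have hedge : ∀ ρ ∈ (nonzeroRoots g).image norm, 0 < ρ ∧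
      ∃ i j, i < j ∧ IsDominantIndex g ρ i ∧ IsDominantIndex g ρ j := by
    intro ρ hρ
    obtain ⟨x, hx, rfl⟩ := Finset.mem_image.mp hρ
    exact ⟨norm_pos_iff.mpr (mem_nonzeroRoots.mp hx).1,
      exists_isDominantIndex_lt_isDominantIndex hx⟩
  choose! hpos i j hij hi hj using hedge
  have hmono : StrictMonoOn j ((nonzeroRoots g).image norm : Finset ℝ) := fun ρ hρ ρ' hρ' hlt ↦
    ((hj ρ hρ).le_of_lt hg (hpos ρ hρ) hlt (hi ρ' hρ')).trans_lt (hij ρ' hρ')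
  have hmaps : ∀ ρ ∈ (nonzeroRoots g).image norm, j ρ ∈ g.support.erase g.natTrailingDegree := by
    intro ρ hρ
    have hle : g.natTrailingDegree ≤ i ρ :=
      natTrailingDegree_le_of_ne_zero ((hi ρ hρ).coeff_ne_zero hg (hpos ρ hρ))
    exact Finset.mem_erase.mpr ⟨(hle.trans_lt (hij ρ hρ)).ne',
      mem_support_iff.mpr ((hj ρ hρ).coeff_ne_zero hg (hpos ρ hρ))⟩
  calc ((nonzeroRoots g).image norm).card
      ≤ (g.support.erase g.natTrailingDegree).card :=
        Finset.card_le_card_of_injOn j hmaps hmono.injOn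
    _ < g.support.card := Finset.card_erase_lt_of_mem (natTrailingDegree_mem_support_of_nonzero hg)

lemma exists_add_eq_norm_coeff_mul_le (f g : L[X]) (k : ℕ) :
    ∃ a b, a + b = k ∧ ‖(f * g).coeff k‖ ≤ ‖f.coeff a * g.coeff b‖ := by
  obtain ⟨⟨a, b⟩, hab, hle⟩ := IsUltrametricDist.exists_norm_finsetSum_le_of_nonempty
    (t := Finset.HasAntidiagonal.antidiagonal k) ⟨(0, k), by simp⟩
    fun ab : ℕ × ℕ ↦ f.coeff ab.1 * g.coeff ab.2
  exact ⟨a, b, Finset.HasAntidiagonal.mem_antidiagonal.mp hab, by rwa [coeff_mul]⟩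

-- Gauss's lemma, in the refined form that tracks where the Gauss norm is attained.
lemma IsLastDominantIndex.mul (hf0 : f ≠ 0) (hg0 : g ≠ 0) (hr : 0 < r)
    (hf : IsLastDominantIndex f r i) (hg : IsLastDominantIndex g r j) :
    IsLastDominantIndex (f * g) r (i + j) := by
  have hweight : ∀ a b, ‖f.coeff a * g.coeff b‖ * r ^ (a + b) =
      (‖f.coeff a‖ * r ^ a) * (‖g.coeff b‖ * r ^ b) := fun a b ↦ by rw [norm_mul, pow_add]; ring
  have hle : ∀ a b, ‖f.coeff a * g.coeff b‖ * r ^ (a + b) ≤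
      ‖f.coeff i * g.coeff j‖ * r ^ (i + j) := by
    intro a b
    rw [hweight, hweight]
    exact mul_le_mul (hf.1 a) (hg.1 b) (by positivity) (by positivity)
  have hlt : ∀ a b, i < a ∨ j < b → ‖f.coeff a * g.coeff b‖ * r ^ (a + b) <
      ‖f.coeff i * g.coeff j‖ * r ^ (i + j) := by
    intro a b hab
    rw [hweight, hweight]
    rcases hab with ha | hb
    · exact (mul_le_mul_of_nonneg_left (hg.1 b) (by positivity)).trans_lt
        (mul_lt_mul_of_pos_right (hf.2 a ha) (hg.1.pos hg0 hr))
    · exact mul_lt_mul' (hf.1 a) (hg.2 b hb) (by positivity) (hf.1.pos hf0 hr)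
  have hcoeff : ‖(f * g).coeff (i + j)‖ = ‖f.coeff i * g.coeff j‖ := by
    rw [coeff_mul]
    refine IsUltrametricDist.isNonarchimedean_norm.apply_sum_eq_of_lt (k := (i, j))
      (l := fun ab : ℕ × ℕ ↦ f.coeff ab.1 * g.coeff ab.2) (fun a ↦ (norm_neg a).symm) (by simp) ?_
    rintro ⟨a, b⟩ hab hne
    rw [Finset.HasAntidiagonal.mem_antidiagonal] at hab
    refine lt_of_mul_lt_mul_right (hab ▸ hlt a b ?_) (pow_nonneg hr.le (a + b))
    grind
  rw [IsLastDominantIndex, IsDominantIndex, hcoeff]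
  refine ⟨fun k ↦ ?_, fun k hk ↦ ?_⟩
  · obtain ⟨a, b, rfl, hab⟩ := exists_add_eq_norm_coeff_mul_le f g k
    exact (mul_le_mul_of_nonneg_right hab (by positivity)).trans (hle a b)
  · obtain ⟨a, b, rfl, hab⟩ := exists_add_eq_norm_coeff_mul_le f g k
    exact (mul_le_mul_of_nonneg_right hab (by positivity)).trans_lt (hlt a b (by omega))

lemma isLastDominantIndex_prod_X_sub_C {S : Finset L} (hr : 0 < r) (hS : ∀ a ∈ S, ‖a‖ ≤ r) :
    IsLastDominantIndex (∏ a ∈ S, (X - C a)) r S.card := by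
  classical
  induction S using Finset.induction_on with
  | empty =>
    refine ⟨fun k ↦ ?_, fun k hk ↦ ?_⟩
    · by_cases hk : k = 0 <;> simp [coeff_one, hk]
    · rw [Finset.card_empty] at hk
      simp [coeff_one, hk.ne']
  | insert a S ha ih =>
    rw [Finset.prod_insert ha, Finset.card_insert_of_notMem ha, add_comm]
    exact (isLastDominantIndex_X_sub_C hr (hS a (by simp))).mul (X_sub_C_ne_zero a)
      (Finset.prod_ne_zero_iff.mpr fun b _ ↦ X_sub_C_ne_zero b) hr
      (ih fun b hb ↦ hS b (Finset.mem_insert_of_mem hb))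

lemma IsLastDominantIndex.card_le (hg : g ≠ 0) (hr : 0 < r) (hi : IsLastDominantIndex g r i)
    {S : Finset L} (hS : ∀ a ∈ S, ‖a‖ ≤ r ∧ g.eval a = 0) : S.card ≤ i := by
  have hdvd : ∏ a ∈ S, (X - C a) ∣ g :=
    Finset.prod_dvd_of_coprime
      (fun a _ b _ hab ↦ pairwise_coprime_X_sub_C Function.injective_id hab)
      fun a ha ↦ dvd_iff_isRoot.mpr (hS a ha).2
  obtain ⟨q, rfl⟩ := hdvd
  obtain ⟨j, hj⟩ := exists_isLastDominantIndex (right_ne_zero_of_mul hg) hr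
  have hprod := isLastDominantIndex_prod_X_sub_C hr fun a ha ↦ (hS a ha).1
  exact (Nat.le_add_right _ _).trans
    (hi.le (hprod.mul (left_ne_zero_of_mul hg) (right_ne_zero_of_mul hg) hr hj).1)

end Ultrametric

section Padic

variable (p : ℕ) [hp : Fact p.Prime]

lemma one_le_natCast_mul_norm_natCast {L : Type*} [NormedField L] [NormedAlgebra ℚ_[p] L] {n : ℕ}
    (hn : n ≠ 0) : 1 ≤ n * ‖(n : L)‖ := by
  rw [← map_natCast (algebraMap ℚ_[p] L), norm_algebraMap', Padic.norm_eq_zpow_neg_valuation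
    (by exact_mod_cast hn), Padic.valuation_natCast, zpow_neg, zpow_natCast, ← div_eq_mul_inv,
    one_le_div (by exact_mod_cast pow_pos hp.out.pos _)]
  exact_mod_cast Nat.le_of_dvd (Nat.pos_of_ne_zero hn) pow_padicValNat_dvd

lemma fintype_card_le_pow_finrank_of_incongruent {ι M : Type*} [Fintype ι] [AddCommGroup M]
    [Module ℤ_[p] M] [Module.Free ℤ_[p] M] [Module.Finite ℤ_[p] M] {x : ι → M}
    (hx : ∀ i j z, x i - x j = (p : ℤ_[p]) • z → i = j) :
    Fintype.card ι ≤ p ^ Module.finrank ℤ_[p] M := by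
  let b := Module.finBasis ℤ_[p] M
  have hinj : Function.Injective fun i k ↦ PadicInt.toZMod (b.equivFun (x i) k) := by
    intro i j hij
    have hdvd : ∀ k, ∃ w, b.equivFun (x i) k - b.equivFun (x j) k = p * w := by
      intro k
      have hker : b.equivFun (x i) k - b.equivFun (x j) k ∈ RingHom.ker PadicInt.toZMod := by
        rw [RingHom.mem_ker, map_sub, sub_eq_zero]
        exact congrFun hij k
      rwa [PadicInt.ker_toZMod, PadicInt.maximalIdeal_eq_span_p, Ideal.mem_span_singleton] at hker
    choose w hw using hdvd
    refine hx i j (b.equivFun.symm w) (b.equivFun.injective ?_)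
    rw [map_sub, map_smul, LinearEquiv.apply_symm_apply]
    exact funext hw
  simpa [ZMod.card] using Fintype.card_le_of_injective _ hinj

variable {L : Type*} [NormedField L] [NormedAlgebra ℚ_[p] L] [FiniteDimensional ℚ_[p] L]

lemma norm_pow_finrank_le {x : L} (hx : ‖x‖ < 1) : ‖x‖ ^ Module.finrank ℚ_[p] L ≤ (p : ℝ)⁻¹ := by
  have hdeg : (minpoly ℚ_[p] x).natDegree ≠ 0 :=
    (minpoly.natDegree_pos (Algebra.IsIntegral.isIntegral x)).ne'
  have hpow : ‖x‖ ^ (minpoly ℚ_[p] x).natDegree = ‖(minpoly ℚ_[p] x).coeff 0‖ := by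
    rw [NormedAlgebra.norm_eq_spectralNorm ℚ_[p] x,
      spectralNorm.spectralNorm_eq_norm_coeff_zero_rpow, one_div,
      Real.rpow_inv_natCast_pow (norm_nonneg _) hdeg]
  calc ‖x‖ ^ Module.finrank ℚ_[p] L
      ≤ ‖x‖ ^ (minpoly ℚ_[p] x).natDegree :=
        pow_le_pow_of_le_one (norm_nonneg x) hx.le (minpoly.natDegree_le x)
    _ = ‖(minpoly ℚ_[p] x).coeff 0‖ := hpow
    _ ≤ (p : ℝ) ^ ((0 : ℤ) - 1) := by
        rw [← Padic.norm_lt_pow_iff_norm_le_pow_sub_one, zpow_zero, ← hpow]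
        exact pow_lt_one₀ (norm_nonneg x) hx hdeg
    _ = (p : ℝ)⁻¹ := by simp

variable [IsUltrametricDist L]

lemma fintype_card_le_pow_finrank_of_one_le_norm_sub {ι : Type*} [Fintype ι] {x : ι → L}
    (hx : ∀ i, ‖x i‖ ≤ 1) (hsep : ∀ i j, i ≠ j → 1 ≤ ‖x i - x j‖) :
    Fintype.card ι ≤ p ^ Module.finrank ℚ_[p] L := by
  let _ : Algebra ℤ_[p] L := ((algebraMap ℚ_[p] L).comp (algebraMap ℤ_[p] ℚ_[p])).toAlgebra
  have : IsScalarTower ℤ_[p] ℚ_[p] L := .of_algebraMap_eq fun _ ↦ rfl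
  have : Module.IsTorsionFree ℤ_[p] L := by
    rw [Module.isTorsionFree_iff_algebraMap_injective]
    exact (algebraMap ℚ_[p] L).injective.comp (IsFractionRing.injective ℤ_[p] ℚ_[p])
  have hsmul : ∀ (a : ℤ_[p]) (y : L), ‖a • y‖ = ‖a‖ * ‖y‖ := fun a y ↦ by
    rw [← algebraMap_smul ℚ_[p], norm_smul]
    rfl
  let M := Submodule.span ℤ_[p] (Set.range x)
  have : Module.Finite ℤ_[p] M := Module.Finite.span_of_finite _ (Set.finite_range x)
  have : Module.Free ℤ_[p] M := Module.free_of_finite_type_torsion_free'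
  have hM : ∀ y ∈ M, ‖y‖ ≤ 1 := by
    intro y hy
    induction hy using Submodule.span_induction with
    | mem y hy => obtain ⟨i, rfl⟩ := hy; exact hx i
    | zero => simp
    | add y z _ _ hy hz => exact (IsUltrametricDist.norm_add_le_max y z).trans (max_le hy hz)
    | smul a y _ hy => rw [hsmul]; exact mul_le_one₀ a.norm_le_one (norm_nonneg _) hy
  have hrank : Module.finrank ℤ_[p] M ≤ Module.finrank ℚ_[p] L := by
    have hindep := (Module.finBasis ℤ_[p] M).linearIndependent.map' M.subtype M.ker_subtype
    simpa using ((LinearIndependent.iff_fractionRing ℤ_[p] ℚ_[p]).mp hindep).fintype_card_le_finrank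
  refine (fintype_card_le_pow_finrank_of_incongruent p (M := M)
    (x := fun i ↦ ⟨x i, Submodule.subset_span ⟨i, rfl⟩⟩) fun i j z hz ↦ ?_).trans
    (Nat.pow_le_pow_right hp.out.pos hrank)
  by_contra hij
  have hlt : ‖x i - x j‖ < 1 := by
    rw [show x i - x j = (p : ℤ_[p]) • (z : L) from congrArg Subtype.val hz, hsmul]
    exact mul_lt_one_of_nonneg_of_lt_one_left (norm_nonneg _) Padic.norm_p_lt_one (hM z z.2)
  exact hlt.not_ge (hsep i j hij)

lemma card_add_one_le_pow_finrank {T : Finset L} {ρ : ℝ} (hρ : 0 < ρ) (hT : ∀ x ∈ T, ‖x‖ = ρ)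
    (hsep : ∀ x ∈ T, ∀ y ∈ T, x ≠ y → ρ ≤ ‖x - y‖) :
    T.card + 1 ≤ p ^ Module.finrank ℚ_[p] L := by
  obtain rfl | ⟨a, ha⟩ := T.eq_empty_or_nonempty
  · simpa using Nat.one_le_pow _ _ hp.out.pos
  have hdiv : ∀ x ∈ T, ‖x / a‖ = 1 := fun x hx ↦ by
    rw [norm_div, hT x hx, hT a ha, div_self hρ.ne']
  have hle := fintype_card_le_pow_finrank_of_one_le_norm_sub p (ι := Option T)
    (x := fun o ↦ o.elim 0 fun x ↦ x / a) ?_ ?_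
  · simpa using hle
  · rintro (_ | ⟨x, hx⟩)
    · simp
    · exact (hdiv x hx).le
  · rintro (_ | ⟨x, hx⟩) (_ | ⟨y, hy⟩) hne
    · exact absurd rfl hne
    · simpa using (hdiv y hy).ge
    · simpa using (hdiv x hx).ge
    · simp only [Option.elim_some, ← sub_div]
      rw [norm_div, hT a ha, one_le_div hρ]
      exact hsep x hx y hy fun hxy ↦ hne (by simp [hxy])

-- The open balls of radius `ρ` on the sphere `‖x‖ = ρ` are the nonzero residue classes.
lemma card_le_of_forall_norm_eq {S : Finset L} {ρ B : ℝ} (hρ : 0 < ρ) (hS : ∀ x ∈ S, ‖x‖ = ρ)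
    (hB0 : 0 ≤ B) (hB : ∀ x ∈ S, ∀ T ⊆ S, (∀ y ∈ T, ‖y - x‖ < ‖x‖) → (T.card : ℝ) ≤ B) :
    (S.card : ℝ) ≤ ((p : ℝ) ^ Module.finrank ℚ_[p] L - 1) * B := by
  classical
  let ball : L → Set L := fun x ↦ Metric.ball x ρ
  obtain ⟨T, hTS, hinj, himage⟩ := Finset.exists_subset_injOn_image_eq_of_surjOn (f := ball) S
    (S.image ball) (by simp [Set.surjOn_image])
  have hTS' : T ⊆ S := by exact_mod_cast hTS
  have hT : T.card + 1 ≤ p ^ Module.finrank ℚ_[p] L := by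
    refine card_add_one_le_pow_finrank p hρ (fun x hx ↦ hS x (hTS' hx)) fun x hx y hy hxy ↦ ?_
    by_contra! hlt
    rw [← dist_eq_norm, ← Metric.mem_ball'] at hlt
    exact hxy (hinj hx hy (IsUltrametricDist.ball_eq_of_mem hlt))
  have himage_card : ((S.image ball).card : ℝ) ≤ (p : ℝ) ^ Module.finrank ℚ_[p] L - 1 := by
    rw [← himage, Finset.card_image_of_injOn hinj, le_sub_iff_add_le]
    exact_mod_cast hT
  refine card_le_mul_of_card_fiber_le himage_card hB0 fun x hx ↦
    hB x hx _ (Finset.filter_subset _ _) fun y hy ↦ ?_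
  rw [hS x hx, ← dist_eq_norm, ← Metric.mem_ball]
  change y ∈ ball x
  rw [← (Finset.mem_filter.mp hy).2]
  exact Metric.mem_ball_self hρ

lemma card_nonzeroRoots_le_of_clusters {g : L[X]} {k : ℕ} {B : ℝ} (hg : g.support.card ≤ k + 1)
    (hB0 : 0 ≤ B)
    (hB : ∀ x ∈ nonzeroRoots g, ∀ T ⊆ nonzeroRoots g, (∀ y ∈ T, ‖y - x‖ < ‖x‖) →
      (T.card : ℝ) ≤ B) :
    ((nonzeroRoots g).card : ℝ) ≤ k * (((p : ℝ) ^ Module.finrank ℚ_[p] L - 1) * B) := by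
  classical
  have hpd : (1 : ℝ) ≤ (p : ℝ) ^ Module.finrank ℚ_[p] L :=
    one_le_pow₀ (by exact_mod_cast hp.out.one_le)
  have hpdB : 0 ≤ ((p : ℝ) ^ Module.finrank ℚ_[p] L - 1) * B :=
    mul_nonneg (sub_nonneg.mpr hpd) hB0
  obtain rfl | hg0 := eq_or_ne g 0
  · simpa [nonzeroRoots] using mul_nonneg k.cast_nonneg hpdB
  have hnorms : ((nonzeroRoots g).image norm).card ≤ k :=
    Nat.lt_succ_iff.mp ((card_image_norm_nonzeroRoots_lt_card_support hg0).trans_le hg)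
  exact card_le_mul_of_card_fiber_le (by exact_mod_cast hnorms) hpdB fun x hx ↦
    card_le_of_forall_norm_eq p (norm_pos_iff.mpr (mem_nonzeroRoots.mp hx).1)
      (fun y hy ↦ (Finset.mem_filter.mp hy).2) hB0 fun y hy T hT ↦
      hB y (Finset.filter_subset _ _ hy) T (hT.trans (Finset.filter_subset _ _))

end Padic

/-- The bound `d p (p ^ d - 1) / (p - 1)` for the number of nonzero roots of a binomial over a
`p`-adic field of degree `d`. -/
noncomputable def binomialBound (p d : ℕ) : ℝ :=
  d * p * ((p : ℝ) ^ d - 1) / ((p : ℝ) - 1)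

lemma binomialBound_nonneg (p d : ℕ) [hp : Fact p.Prime] : 0 ≤ binomialBound p d := by
  have hp1 : (1 : ℝ) < p := by exact_mod_cast hp.out.one_lt
  exact div_nonneg (mul_nonneg (by positivity) (sub_nonneg.mpr (one_le_pow₀ hp1.le)))
    (sub_nonneg.mpr hp1.le)

section RootsOfUnity

variable (p : ℕ) [hp : Fact p.Prime] {L : Type*} [NormedField L] [IsUltrametricDist L]

lemma mem_principalUnitGroup_iff_norm {u : Lˣ} :
    u ∈ (NormedField.valuation (K := L)).valuationSubring.principalUnitGroup ↔
      ‖(u : L) - 1‖ < 1 := by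
  rw [ValuationSubring.mem_principalUnitGroup_iff,
    ← (NormedField.valuation (K := L)).isEquiv_valuation_valuationSubring.lt_one_iff_lt_one]
  rfl

lemma norm_pow_sub_one_lt_one {x : L} (hx : ‖x - 1‖ < 1) (n : ℕ) : ‖x ^ n - 1‖ < 1 := by
  induction n with
  | zero => simp
  | succ n ih =>
    have hxn : x ^ (n + 1) - 1 = (x ^ n - 1) * (x - 1) + ((x ^ n - 1) + (x - 1)) := by ring
    rw [hxn]
    refine (IsUltrametricDist.norm_add_le_max _ _).trans_lt (max_lt ?_
      ((IsUltrametricDist.norm_add_le_max _ _).trans_lt (max_lt ih hx)))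
    rw [norm_mul]
    exact mul_lt_one_of_nonneg_of_lt_one_left (norm_nonneg _) ih hx.le

variable [NormedAlgebra ℚ_[p] L] [FiniteDimensional ℚ_[p] L]

lemma norm_eval_one_cyclotomic_pow_finrank_le {ζ : L} {N : ℕ} [NeZero N]
    (hζ : IsPrimitiveRoot ζ N) (hζ1 : ‖ζ - 1‖ < 1) :
    ‖(cyclotomic N L).eval 1‖ ^ Module.finrank ℚ_[p] L ≤ (p : ℝ)⁻¹ ^ N.totient := by
  rw [cyclotomic_eq_prod_X_sub_primitiveRoots hζ, eval_prod, norm_prod, ← Finset.prod_pow,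
    ← hζ.card_primitiveRoots, ← Finset.prod_const]
  refine Finset.prod_le_prod (fun _ _ ↦ by positivity) fun μ hμ ↦ ?_
  rw [mem_primitiveRoots (NeZero.pos N)] at hμ
  obtain ⟨i, -, rfl⟩ := hζ.eq_pow_of_pow_eq_one hμ.pow_eq_one
  simp only [eval_sub, eval_X, eval_C]
  rw [norm_sub_rev]
  exact norm_pow_finrank_le p (norm_pow_sub_one_lt_one hζ1 i)

/- `Φ_N(1)` is a product of elements of norm less than one, whereas it is `1` or a prime `ℓ ∣ N`;
hence `N` is a power of `p`. -/
lemma mul_pred_le_of_isPrimitiveRoot {ζ : L} {N : ℕ} [NeZero N] (hζ : IsPrimitiveRoot ζ N)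
    (hζ1 : ‖ζ - 1‖ < 1) : N * (p - 1) ≤ Module.finrank ℚ_[p] L * p := by
  have hle := norm_eval_one_cyclotomic_pow_finrank_le p hζ hζ1
  have hp0 : (0 : ℝ) ≤ (p : ℝ)⁻¹ := by positivity
  have hp1 : (p : ℝ)⁻¹ < 1 := inv_lt_one_of_one_lt₀ (by exact_mod_cast hp.out.one_lt)
  have hne : ‖(cyclotomic N L).eval 1‖ ≠ 1 := by
    intro h
    rw [h, one_pow] at hle
    exact hle.not_gt (pow_lt_one₀ hp0 hp1 (Nat.totient_pos.mpr (NeZero.pos N)).ne')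
  by_cases hpow : ∃ q k : ℕ, q.Prime ∧ q ^ k = N
  · obtain ⟨q, k, hq, rfl⟩ := hpow
    have := Fact.mk hq
    obtain _ | k := k
    · simpa using (Nat.sub_le p 1).trans (Nat.le_mul_of_pos_left p Module.finrank_pos)
    have hnorm : ‖(q : L)‖ = ‖(q : ℚ_[p])‖ := by
      rw [← norm_algebraMap' L (q : ℚ_[p]), map_natCast]
    rw [eval_one_cyclotomic_prime_pow, hnorm] at hne hle
    obtain rfl : p = q := by
      rwa [Ne, Padic.norm_natCast_eq_one_iff, Nat.coprime_primes hp.out hq, not_not] at hne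
    rw [Padic.norm_p, pow_le_pow_iff_right_of_lt_one₀ (by simpa using hp.out.pos) hp1,
      Nat.totient_prime_pow_succ hq] at hle
    calc p ^ (k + 1) * (p - 1) = p ^ k * (p - 1) * p := by ring
      _ ≤ Module.finrank ℚ_[p] L * p := by gcongr
  · refine absurd ?_ hne
    rw [eval_one_cyclotomic_not_prime_pow fun {q} hq k hk ↦ hpow ⟨q, k, hq, hk⟩, norm_one]

lemma card_mul_pred_le_of_pow_eq_one {n : ℕ} (hn : n ≠ 0) {S : Finset L}
    (hS : ∀ x ∈ S, x ^ n = 1 ∧ ‖x - 1‖ < 1) :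
    S.card * (p - 1) ≤ Module.finrank ℚ_[p] L * p := by
  have := NeZero.mk hn
  let G : Subgroup Lˣ :=
    rootsOfUnity n L ⊓ (NormedField.valuation (K := L)).valuationSubring.principalUnitGroup
  have : Finite G := Finite.of_injective (Subgroup.inclusion (inf_le_left : G ≤ rootsOfUnity n L))
    (Subgroup.inclusion_injective _)
  obtain ⟨ζ, hζ⟩ := IsCyclic.exists_generator (α := G)
  have hprim : IsPrimitiveRoot ((ζ : Lˣ) : L) (Nat.card G) := by
    rw [← orderOf_eq_card_of_forall_mem_zpowers hζ, ← Subgroup.orderOf_coe ζ, ← orderOf_units]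
    exact IsPrimitiveRoot.orderOf _
  have hcard : S.card ≤ Nat.card G := by
    have hne : ∀ x ∈ S, x ≠ 0 := fun x hx h0 ↦ by simpa [h0, hn] using (hS x hx).1
    rw [← Nat.card_eq_finsetCard]
    exact Nat.card_le_card_of_injective
      (fun x : S ↦ (⟨Units.mk0 x (hne x x.2), (mem_rootsOfUnity' n _).mpr (hS x x.2).1,
        mem_principalUnitGroup_iff_norm.mpr (hS x x.2).2⟩ : G))
      fun x y hxy ↦ Subtype.ext (congrArg (fun u : G ↦ ((u : Lˣ) : L)) hxy)
  exact (Nat.mul_le_mul_right _ hcard).trans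
    (mul_pred_le_of_isPrimitiveRoot p hprim (mem_principalUnitGroup_iff_norm.mp ζ.2.2))

lemma card_le_binomialBound_of_pow_eq {n : ℕ} (hn : n ≠ 0) {κ : L} {S : Finset L}
    (hS : ∀ x ∈ S, x ≠ 0 ∧ x ^ n = κ) :
    (S.card : ℝ) ≤ binomialBound p (Module.finrank ℚ_[p] L) := by
  classical
  have hp1 : (0 : ℝ) < p - 1 := sub_pos.mpr (by exact_mod_cast hp.out.one_lt)
  let g : L[X] := C 1 * X ^ n + C (-κ) * X ^ 0
  have hsupp : g.support.card ≤ 1 + 1 :=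
    (Finset.card_le_card (support_binomial_subset _ _ _ _)).trans Finset.card_le_two
  have hg : g = X ^ n - C κ := by simp [g, sub_eq_add_neg]
  have hroots : S ⊆ nonzeroRoots g := fun x hx ↦ mem_nonzeroRoots.mpr
    ⟨(hS x hx).1, hg ▸ X_pow_sub_C_ne_zero (Nat.pos_of_ne_zero hn) κ, by simp [g, (hS x hx).2]⟩
  have hcluster : ∀ x ∈ nonzeroRoots g, ∀ T ⊆ nonzeroRoots g, (∀ y ∈ T, ‖y - x‖ < ‖x‖) →
      (T.card : ℝ) ≤ Module.finrank ℚ_[p] L * p / (p - 1) := by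
    intro x hx T hT hnear
    have hpow : ∀ y ∈ nonzeroRoots g, y ^ n = κ := fun y hy ↦ by
      simpa [hg, sub_eq_zero] using (mem_nonzeroRoots.mp hy).2.2
    have hx0 : x ≠ 0 := (mem_nonzeroRoots.mp hx).1
    have hunit : ∀ z ∈ T.image (· / x), z ^ n = 1 ∧ ‖z - 1‖ < 1 := by
      simp only [Finset.forall_mem_image]
      intro y hy
      constructor
      · rw [div_pow, hpow y (hT hy), ← hpow x hx, div_self (pow_ne_zero n hx0)]
      · rw [div_sub_one hx0, norm_div, div_lt_one (norm_pos_iff.mpr hx0)]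
        exact hnear y hy
    have hcard := card_mul_pred_le_of_pow_eq_one p hn hunit
    rw [Finset.card_image_of_injective _ fun y z hyz ↦ (div_left_inj' hx0).mp hyz] at hcard
    rw [le_div_iff₀ hp1, ← Nat.cast_pred hp.out.pos]
    exact_mod_cast hcard
  calc (S.card : ℝ) ≤ (nonzeroRoots g).card := by exact_mod_cast Finset.card_le_card hroots
    _ ≤ (1 : ℕ) * (((p : ℝ) ^ Module.finrank ℚ_[p] L - 1) *
          (Module.finrank ℚ_[p] L * p / (p - 1))) :=
        card_nonzeroRoots_le_of_clusters p hsupp (by positivity) hcluster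
    _ = binomialBound p (Module.finrank ℚ_[p] L) := by
        rw [binomialBound]
        push_cast
        ring

lemma card_le_binomialBound_of_zpow_eq {n : ℤ} (hn : n ≠ 0) {κ : L} {S : Finset L}
    (hS : ∀ x ∈ S, x ≠ 0 ∧ x ^ n = κ) :
    (S.card : ℝ) ≤ binomialBound p (Module.finrank ℚ_[p] L) := by
  obtain ⟨k, rfl | rfl⟩ := n.eq_nat_or_neg
  · exact card_le_binomialBound_of_pow_eq p (by simpa using hn) (κ := κ)
      (by simpa only [zpow_natCast] using hS)
  · refine card_le_binomialBound_of_pow_eq p (n := k) (by simpa using hn) (κ := κ⁻¹)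
      fun x hx ↦ ⟨(hS x hx).1, ?_⟩
    rw [← (hS x hx).2, zpow_neg, zpow_natCast, inv_inv]

lemma card_nonzeroRoots_binomial_le (c d : L) (m n : ℕ) :
    ((nonzeroRoots (C c * X ^ m + C d * X ^ n)).card : ℝ)
      ≤ binomialBound p (Module.finrank ℚ_[p] L) := by
  obtain hempty | ⟨x, hx⟩ := (nonzeroRoots (C c * X ^ m + C d * X ^ n)).eq_empty_or_nonempty
  · simpa [hempty] using binomialBound_nonneg p _
  have hmonomial : ∀ y ≠ 0, ∀ k : ℕ, (X ^ k : L[X]).eval y ≠ 0 := fun y hy k ↦ by simp [hy]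
  obtain ⟨hx0, -, -⟩ := mem_nonzeroRoots.mp hx
  obtain ⟨hmn, hc⟩ := ne_of_mem_nonzeroRoots_add hx (hmonomial x hx0 m) (hmonomial x hx0 n)
  have hmn' : (m : ℤ) - n ≠ 0 := sub_ne_zero.mpr fun h ↦ hmn (by rw [Int.natCast_inj.mp h])
  refine card_le_binomialBound_of_zpow_eq p hmn' (κ := -d / c) fun y hy ↦ ?_
  obtain ⟨hy0, -, hzero⟩ := mem_nonzeroRoots.mp hy
  rw [eval_add_eq_zero_iff_eval_div_eval_eq hc (hmonomial y hy0 n)] at hzero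
  exact ⟨hy0, by simpa [zpow_sub₀ hy0] using hzero⟩

end RootsOfUnity

/-- An upper bound for the number of roots of a trinomial over a `p`-adic field of degree `d` in an
open disc `‖y - x‖ < ‖x‖`. -/
noncomputable def discBound (p d : ℕ) : ℝ :=
  2 * (exp 1 / (exp 1 - 1)) * (1 + d * logb p (2 * d / log p))

/-- The bound `2 (p ^ d - 1) discBound p d` for the number of nonzero roots of a trinomial over a
`p`-adic field of degree `d`: the factor `2` counts the possible norms, `p ^ d - 1` the discs on a
sphere. -/
noncomputable def trinomialBound (p d : ℕ) : ℝ :=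
  2 * ((p : ℝ) ^ d - 1) * discBound p d

section DiscBound

lemma le_discBound {p d i : ℕ} (hp : 1 < p) (hd : 0 < d) (hi : 0 < i)
    (h : p ^ (i - 2) ≤ i ^ (2 * d)) : (i : ℝ) ≤ discBound p d := by
  have hlogp : 0 < log p := log_pos (by exact_mod_cast hp)
  have he : 1 < exp 1 := one_lt_exp_iff.mpr one_pos
  have : (0 : ℝ) < i := by exact_mod_cast hi
  set w := 2 * (d : ℝ) / log p with hw
  have hwpos : 0 < w := by positivity
  have hlog : i - 2 ≤ w * log i := by
    have hcast : (p : ℝ) ^ (i - 2) ≤ (i : ℝ) ^ (2 * d) := by exact_mod_cast h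
    have hlogle := log_le_log (by positivity) hcast
    rw [log_pow, log_pow] at hlogle
    rw [hw, div_mul_eq_mul_div, le_div_iff₀ hlogp]
    calc ((i : ℝ) - 2) * log p ≤ (i - 2 : ℕ) * log p := by
          gcongr
          rw [sub_le_iff_le_add]
          exact_mod_cast le_tsub_add
      _ ≤ 2 * d * log i := by exact_mod_cast hlogle
  -- the tangent line of `log` at `e * w`, where its slope is `1 / (e * w)`
  have htangent : log i ≤ log w + i / (exp 1 * w) := by
    have hle := log_le_sub_one_of_pos (x := i / (exp 1 * w)) (by positivity)
    rw [log_div (by positivity) (by positivity), log_mul (by positivity) (by positivity),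
      log_exp] at hle
    linarith
  have hlinear : i * (exp 1 - 1) ≤ exp 1 * (2 + w * log w) := by
    have hle : i - 2 ≤ w * log w + i / exp 1 := by
      calc i - 2 ≤ w * (log w + i / (exp 1 * w)) := hlog.trans (by gcongr)
        _ = w * log w + i / exp 1 := by field_simp
    have hcancel : exp 1 * (i / exp 1) = i := by field_simp
    linarith [mul_le_mul_of_nonneg_left hle (exp_pos 1).le]
  have hbound : discBound p d = exp 1 * (2 + w * log w) / (exp 1 - 1) := by
    have hlogw : d * logb p w = w * log w / 2 := by
      rw [logb, hw]
      field_simp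
    rw [discBound, ← hw, hlogw]
    ring
  rwa [hbound, le_div_iff₀ (sub_pos.mpr he)]

lemma discBound_nonneg (p d : ℕ) (hp : 1 < p) (hd : 0 < d) : 0 ≤ discBound p d := by
  have hone : ((1 : ℕ) : ℝ) ≤ discBound p d := le_discBound hp hd one_pos (by simp)
  exact zero_le_one.trans (by exact_mod_cast hone)

end DiscBound

section BinomialCoefficients

lemma norm_le_natCast_mul_norm_natCast_mul (p : ℕ) [Fact p.Prime] {L : Type*} [NormedField L]
    [NormedAlgebra ℚ_[p] L] {n : ℕ} (hn : n ≠ 0) (x : L) :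
    ‖x‖ ≤ n * ‖(n : L) * x‖ := by
  rw [norm_mul, ← mul_assoc]
  exact le_mul_of_one_le_left (norm_nonneg x) (one_le_natCast_mul_norm_natCast p hn)

lemma norm_natCast_choose_succ_le (p : ℕ) [Fact p.Prime] {L : Type*} [NormedField L]
    [NormedAlgebra ℚ_[p] L] [IsUltrametricDist L] (N k : ℕ) :
    ‖(N.choose (k + 1) : L)‖ ≤ (k + 1) * ‖(N : L)‖ := by
  obtain _ | N := N
  · simp
  have hmul : ((k + 1 : ℕ) : L) * ((N + 1).choose (k + 1) : L)
      = (N + 1 : ℕ) * (N.choose k : L) := by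
    rw [mul_comm, ← Nat.cast_mul, ← Nat.cast_mul, Nat.add_one_mul_choose_eq]
  calc ‖((N + 1).choose (k + 1) : L)‖
      ≤ (k + 1 : ℕ) * ‖((N + 1 : ℕ) : L) * (N.choose k : L)‖ :=
        hmul ▸ norm_le_natCast_mul_norm_natCast_mul p k.succ_ne_zero _
    _ ≤ (k + 1) * ‖((N + 1 : ℕ) : L)‖ := by
        rw [norm_mul, Nat.cast_add_one]
        gcongr
        exact mul_le_of_le_one_right (norm_nonneg _) (IsUltrametricDist.norm_natCast_le_one L _)

lemma norm_natCast_choose_sub_natCast_choose_le (p : ℕ) [Fact p.Prime] {L : Type*} [NormedField L]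
    [NormedAlgebra ℚ_[p] L] [IsUltrametricDist L] (m n i : ℕ) :
    ‖(n.choose i : L) - (m.choose i : L)‖ ≤ i * ‖(n : L) - m‖ := by
  wlog hmn : m ≤ n generalizing m n
  · rw [norm_sub_rev, norm_sub_rev (n : L)]
    exact this n m (le_of_not_ge hmn)
  obtain ⟨N, rfl⟩ := Nat.exists_eq_add_of_le hmn
  obtain _ | i := i
  · simp
  rw [Nat.add_choose_eq, Finset.Nat.sum_antidiagonal_succ']
  push_cast
  rw [Nat.choose_zero_right, Nat.cast_one, mul_one, add_sub_cancel_left, add_sub_cancel_left]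
  refine IsUltrametricDist.norm_sum_le_of_forall_le_of_nonneg (by positivity) fun kj hkj ↦ ?_
  have hj : (kj.2 : ℝ) ≤ i := by
    exact_mod_cast Finset.HasAntidiagonal.antidiagonal.snd_le hkj
  calc ‖(m.choose kj.1 : L) * (N.choose (kj.2 + 1) : L)‖ ≤ ‖(N.choose (kj.2 + 1) : L)‖ := by
        rw [norm_mul]
        exact mul_le_of_le_one_left (norm_nonneg _) (IsUltrametricDist.norm_natCast_le_one L _)
    _ ≤ (kj.2 + 1) * ‖(N : L)‖ := norm_natCast_choose_succ_le p N kj.2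
    _ ≤ (i + 1) * ‖(N : L)‖ := by gcongr

lemma natCast_succ_mul_choose_combination {R : Type*} [CommRing R] (b c : R) (m n i : ℕ) :
    ((i + 1 : ℕ) : R) * (b * ((m + 1).choose (i + 1) : R) + c * ((n + 1).choose (i + 1) : R))
      = (b * (m + 1) + c * (n + 1)) * (m.choose i : R)
        + c * (n + 1) * ((n.choose i : R) - (m.choose i : R)) := by
  have hchoose : ∀ l : ℕ, ((l : R) + 1) * (l.choose i : R)
      = ((l + 1).choose (i + 1) : R) * (i + 1) := fun l ↦ by
    simpa using congrArg (Nat.cast : ℕ → R) (Nat.add_one_mul_choose_eq l i)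
  push_cast
  linear_combination -b * hchoose m - c * hchoose n

lemma norm_mul_choose_add_mul_sub_le (p : ℕ) [Fact p.Prime] {L : Type*} [NormedField L]
    [NormedAlgebra ℚ_[p] L] [IsUltrametricDist L] (a b : L) (m n k : ℕ) :
    ‖a * (m.choose k : L) + b * ((n.choose k : L) - (m.choose k : L))‖
      ≤ (k + 1) * max ‖a‖ ‖b * ((n : L) - m)‖ := by
  have hmax : 0 ≤ max ‖a‖ ‖b * ((n : L) - m)‖ := le_max_of_le_left (norm_nonneg a)
  refine (IsUltrametricDist.norm_add_le_max _ _).trans (max_le ?_ ?_)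
  · calc ‖a * (m.choose k : L)‖ ≤ ‖a‖ := by
          rw [norm_mul]
          exact mul_le_of_le_one_right (norm_nonneg a) (IsUltrametricDist.norm_natCast_le_one L _)
      _ ≤ max ‖a‖ ‖b * ((n : L) - m)‖ := le_max_left _ _
      _ ≤ (k + 1) * max ‖a‖ ‖b * ((n : L) - m)‖ :=
          le_mul_of_one_le_left hmax (le_add_of_nonneg_left k.cast_nonneg)
  · calc ‖b * ((n.choose k : L) - (m.choose k : L))‖ ≤ ‖b‖ * (k * ‖(n : L) - m‖) := by
          rw [norm_mul]
          gcongr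
          exact norm_natCast_choose_sub_natCast_choose_le p m n k
      _ = k * ‖b * ((n : L) - m)‖ := by rw [norm_mul, mul_left_comm]
      _ ≤ (k + 1) * max ‖a‖ ‖b * ((n : L) - m)‖ := by
          gcongr
          exacts [le_add_of_nonneg_right zero_le_one, le_max_right _ _]

/- Modulo `G 1`, the element `(i + 1) * G (i + 1)` is `c * (n + 1)` times the difference of
`n.choose i` and `m.choose i`; for `i = 1` this is `n - m`, which controls all the others. -/
lemma norm_choose_combination_le (p : ℕ) [Fact p.Prime] {L : Type*} [NormedField L]
    [NormedAlgebra ℚ_[p] L] [IsUltrametricDist L] {G : ℕ → L} {b c : L} {m n : ℕ}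
    (hG : ∀ i, G (i + 1) = b * ((m + 1).choose (i + 1) : L) + c * ((n + 1).choose (i + 1) : L))
    (k : ℕ) : ‖G (k + 2)‖ ≤ (k + 2) ^ 2 * max ‖G 1‖ ‖G 2‖ := by
  have hnat : ∀ (l : ℕ) (x : L), ‖(l : L) * x‖ ≤ ‖x‖ := fun l x ↦ by
    rw [norm_mul]
    exact mul_le_of_le_one_left (norm_nonneg x) (IsUltrametricDist.norm_natCast_le_one L l)
  have hmul : ∀ i, ((i + 1 : ℕ) : L) * G (i + 1)
      = G 1 * (m.choose i : L) + c * (n + 1) * ((n.choose i : L) - (m.choose i : L)) := by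
    intro i
    rw [hG i, hG 0, natCast_succ_mul_choose_combination]
    push_cast [Nat.choose_one_right]
    rfl
  have hsub : ‖c * (n + 1) * ((n : L) - m)‖ ≤ max ‖G 1‖ ‖G 2‖ := by
    have heq : c * (n + 1) * ((n : L) - m) = m * -G 1 + (2 : ℕ) * G 2 := by
      have h2 := hmul 1
      simp only [Nat.choose_one_right] at h2
      linear_combination -h2
    rw [heq]
    refine (IsUltrametricDist.norm_add_le_max _ _).trans (max_le_max ?_ (hnat 2 _))
    exact (hnat m _).trans_eq (norm_neg _)
  calc ‖G (k + 2)‖ ≤ (k + 2 : ℕ) * ‖((k + 2 : ℕ) : L) * G (k + 2)‖ :=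
        norm_le_natCast_mul_norm_natCast_mul p (k + 1).succ_ne_zero _
    _ ≤ (k + 2 : ℕ) * (((k + 1 : ℕ) + 1) * max ‖G 1‖ ‖c * (n + 1) * ((n : L) - m)‖) := by
        rw [hmul (k + 1)]
        gcongr
        exact norm_mul_choose_add_mul_sub_le p _ _ m n (k + 1)
    _ ≤ (k + 2 : ℕ) * (((k + 1 : ℕ) + 1) * max ‖G 1‖ ‖G 2‖) := by
        gcongr (k + 2 : ℕ) * (((k + 1 : ℕ) + 1) * ?_)
        exact max_le (le_max_left _ _) hsub
    _ = (k + 2) ^ 2 * max ‖G 1‖ ‖G 2‖ := by push_cast; ring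

end BinomialCoefficients

section Trinomials

lemma exists_eq_X_pow_mul_trinomial {F : Type*} [Field F] {g : F[X]} (hg : g ≠ 0)
    (hsupp : g.support.card ≤ 3) :
    ∃ (k m n : ℕ) (a b c : F), g = X ^ k * (C a + C b * X ^ (m + 1) + C c * X ^ (n + 1)) := by
  have hpos : g.support.card ≠ 0 := by simpa using hg
  obtain h | h | h : g.support.card = 1 ∨ g.support.card = 2 ∨ g.support.card = 3 := by omega
  · obtain ⟨k, a, -, rfl⟩ := card_support_eq_one.mp h
    exact ⟨k, 0, 0, a, 0, 0, by rw [C_0]; ring⟩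
  · obtain ⟨k, l, hkl, a, b, -, -, rfl⟩ := card_support_eq_two.mp h
    obtain ⟨m, rfl⟩ := Nat.exists_eq_add_of_lt hkl
    exact ⟨k, m, 0, a, b, 0, by rw [C_0]; ring⟩
  · obtain ⟨k, l, l', hkl, hll', a, b, c, -, -, -, rfl⟩ := card_support_eq_three.mp h
    obtain ⟨m, rfl⟩ := Nat.exists_eq_add_of_lt hkl
    obtain ⟨n, rfl⟩ := Nat.exists_eq_add_of_lt hll'
    exact ⟨k, m, m + n + 1, a, b, c, by ring⟩

lemma one_le_sq_mul_pow_of_isDominantIndex {L : Type*} [NormedField L] {G : L[X]} {r : ℝ} {k : ℕ}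
    (hG : G ≠ 0) (hr : 0 < r) (hr1 : r ≤ 1) (hk : IsDominantIndex G r (k + 2))
    (hbound : ‖G.coeff (k + 2)‖ ≤ (k + 2) ^ 2 * max ‖G.coeff 1‖ ‖G.coeff 2‖) :
    1 ≤ ((k : ℝ) + 2) ^ 2 * r ^ k := by
  set Q := max ‖G.coeff 1‖ ‖G.coeff 2‖
  have hQr : Q * r ^ 2 ≤ ‖G.coeff (k + 2)‖ * r ^ (k + 2) := by
    rw [max_mul_of_nonneg _ _ (by positivity), max_le_iff]
    refine ⟨(hk 1).trans' ?_, hk 2⟩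
    exact mul_le_mul_of_nonneg_left (pow_le_pow_of_le_one hr.le hr1 one_le_two) (norm_nonneg _)
  have hQ : 0 < Q := by
    have hpos := hk.pos hG hr
    by_contra! hQ
    have hcoeff : ‖G.coeff (k + 2)‖ ≤ 0 :=
      hbound.trans (mul_nonpos_of_nonneg_of_nonpos (by positivity) hQ)
    exact hpos.not_ge (mul_nonpos_of_nonpos_of_nonneg hcoeff (by positivity))
  refine le_of_mul_le_mul_left ?_ (by positivity : 0 < Q * r ^ 2)
  calc Q * r ^ 2 * 1 ≤ ‖G.coeff (k + 2)‖ * r ^ (k + 2) := by rwa [mul_one]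
    _ ≤ (k + 2) ^ 2 * Q * r ^ (k + 2) := by gcongr
    _ = Q * r ^ 2 * ((k + 2) ^ 2 * r ^ k) := by ring

lemma pow_sub_two_le_pow_of_isDominantIndex {L : Type*} [NormedField L] {G : L[X]} {p d i : ℕ}
    {r : ℝ} (hG : G ≠ 0) (hp : 0 < p) (hr : 0 < r) (hr1 : r ≤ 1) (hrd : r ^ d = (p : ℝ)⁻¹)
    (hi0 : 0 < i) (hi : IsDominantIndex G r i)
    (hbound : ∀ k : ℕ, ‖G.coeff (k + 2)‖ ≤ (k + 2) ^ 2 * max ‖G.coeff 1‖ ‖G.coeff 2‖) :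
    p ^ (i - 2) ≤ i ^ (2 * d) := by
  obtain hi2 | hi2 := lt_or_ge i 2
  · rw [Nat.sub_eq_zero_of_le hi2.le, pow_zero]
    exact Nat.one_le_pow _ _ hi0
  obtain ⟨k, rfl⟩ := Nat.exists_eq_add_of_le' hi2
  have hone := one_le_sq_mul_pow_of_isDominantIndex hG hr hr1 hi (hbound k)
  have hpow : (1 : ℝ) ≤ (k + 2) ^ (2 * d) * ((p : ℝ) ^ k)⁻¹ := by
    calc (1 : ℝ) ≤ ((k + 2) ^ 2 * r ^ k) ^ d := one_le_pow₀ hone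
      _ = (k + 2) ^ (2 * d) * (r ^ d) ^ k := by rw [mul_pow, ← pow_mul, pow_right_comm]
      _ = (k + 2) ^ (2 * d) * ((p : ℝ) ^ k)⁻¹ := by rw [hrd, inv_pow]
  rw [← div_eq_mul_inv, one_le_div (by positivity)] at hpow
  rw [Nat.add_sub_cancel]
  exact_mod_cast hpow

variable (p : ℕ) [hp : Fact p.Prime] {L : Type*} [NormedField L] [NormedAlgebra ℚ_[p] L]
  [FiniteDimensional ℚ_[p] L] [IsUltrametricDist L]

lemma card_le_discBound_of_coeff_le {G : L[X]} (hG : G ≠ 0) {S : Finset L}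
    (hS : ∀ z ∈ S, ‖z‖ < 1 ∧ G.eval z = 0)
    (hbound : ∀ k : ℕ, ‖G.coeff (k + 2)‖ ≤ (k + 2) ^ 2 * max ‖G.coeff 1‖ ‖G.coeff 2‖) :
    (S.card : ℝ) ≤ discBound p (Module.finrank ℚ_[p] L) := by
  set d := Module.finrank ℚ_[p] L
  have hd : 0 < d := Module.finrank_pos
  let r : ℝ := (p : ℝ)⁻¹ ^ (d : ℝ)⁻¹
  have hp0 : (0 : ℝ) < (p : ℝ)⁻¹ := inv_pos.mpr (by exact_mod_cast hp.out.pos)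
  have hr : 0 < r := rpow_pos_of_pos hp0 _
  have hrd : r ^ d = (p : ℝ)⁻¹ := rpow_inv_natCast_pow hp0.le hd.ne'
  have hr1 : r ≤ 1 :=
    rpow_le_one hp0.le (inv_le_one_of_one_le₀ (by exact_mod_cast hp.out.one_le)) (by positivity)
  have hball : ∀ z ∈ S, ‖z‖ ≤ r ∧ G.eval z = 0 := fun z hz ↦ by
    refine ⟨(pow_le_pow_iff_left₀ (norm_nonneg z) hr.le hd.ne').mp ?_, (hS z hz).2⟩
    exact hrd ▸ norm_pow_finrank_le p (hS z hz).1
  obtain ⟨i, hi⟩ := exists_isLastDominantIndex hG hr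
  have hSi : S.card ≤ i := hi.card_le hG hr hball
  obtain rfl | hi0 := i.eq_zero_or_pos
  · simpa [Nat.le_zero.mp hSi] using discBound_nonneg p d hp.out.one_lt hd
  · calc (S.card : ℝ) ≤ i := by exact_mod_cast hSi
      _ ≤ discBound p d := le_discBound hp.out.one_lt hd hi0
          (pow_sub_two_le_pow_of_isDominantIndex hG hp.out.pos hr hr1 hrd hi0 hi.1 hbound)

/- In the coordinate `z = y / x - 1` the trinomial becomes
`a + b x ^ (m + 1) (1 + z) ^ (m + 1) + c x ^ (n + 1) (1 + z) ^ (n + 1)`. -/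
lemma card_le_discBound_of_norm_sub_lt {a b c x : L} {m n : ℕ} (hx : x ≠ 0)
    (hg : C a + C b * X ^ (m + 1) + C c * X ^ (n + 1) ≠ 0) {T : Finset L}
    (hT : ∀ y ∈ T, ‖y - x‖ < ‖x‖ ∧ (C a + C b * X ^ (m + 1) + C c * X ^ (n + 1)).eval y = 0) :
    (T.card : ℝ) ≤ discBound p (Module.finrank ℚ_[p] L) := by
  classical
  set g := C a + C b * X ^ (m + 1) + C c * X ^ (n + 1) with hgdef
  set G := g.comp (C x * (1 + X)) with hGdef
  have hG : G ≠ 0 := by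
    rw [hGdef, Ne, comp_eq_zero_iff, not_or, not_and_or]
    refine ⟨hg, Or.inr fun h ↦ hx ?_⟩
    simpa [coeff_one, coeff_C] using congrArg (coeff · 1) h
  have hcoeff : ∀ i, G.coeff (i + 1) = b * x ^ (m + 1) * ((m + 1).choose (i + 1) : L)
      + c * x ^ (n + 1) * ((n + 1).choose (i + 1) : L) := by
    intro i
    simp only [hGdef, hgdef, add_comp, mul_comp, C_comp, X_pow_comp, mul_pow, ← C_pow, ← mul_assoc,
      ← C_mul, coeff_add, coeff_C_mul, coeff_one_add_X_pow, coeff_C_succ, zero_add]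
  have hdisc : ∀ z ∈ T.image fun y ↦ y / x - 1, ‖z‖ < 1 ∧ G.eval z = 0 := by
    simp only [Finset.forall_mem_image]
    intro y hy
    constructor
    · rw [div_sub_one hx, norm_div, div_lt_one (norm_pos_iff.mpr hx)]
      exact (hT y hy).1
    · simpa [hGdef, eval_comp, mul_div_cancel₀ _ hx] using (hT y hy).2
  rw [← Finset.card_image_of_injective T (f := fun y ↦ y / x - 1) fun y z hyz ↦ by
    simpa [hx] using hyz]
  exact card_le_discBound_of_coeff_le p hG hdisc (norm_choose_combination_le p hcoeff)

lemma card_cluster_le_discBound {g : L[X]} (hsupp : g.support.card ≤ 3) {x : L}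
    (hx : x ∈ nonzeroRoots g) {T : Finset L} (hT : T ⊆ nonzeroRoots g)
    (hnear : ∀ y ∈ T, ‖y - x‖ < ‖x‖) :
    (T.card : ℝ) ≤ discBound p (Module.finrank ℚ_[p] L) := by
  obtain ⟨hx0, hg, -⟩ := mem_nonzeroRoots.mp hx
  obtain ⟨k, m, n, a, b, c, rfl⟩ := exists_eq_X_pow_mul_trinomial hg hsupp
  refine card_le_discBound_of_norm_sub_lt p hx0 (right_ne_zero_of_mul hg) fun y hy ↦
    ⟨hnear y hy, ?_⟩
  obtain ⟨hy0, -, heval⟩ := mem_nonzeroRoots.mp (hT hy)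
  rw [eval_mul, mul_eq_zero, eval_pow, eval_X] at heval
  exact heval.resolve_left (pow_ne_zero k hy0)

lemma card_nonzeroRoots_trinomial_le {g : L[X]} (hsupp : g.support.card ≤ 3) :
    ((nonzeroRoots g).card : ℝ) ≤ trinomialBound p (Module.finrank ℚ_[p] L) := by
  refine (card_nonzeroRoots_le_of_clusters p hsupp
    (discBound_nonneg p _ hp.out.one_lt Module.finrank_pos)
    fun x hx T hT hnear ↦ card_cluster_le_discBound p hsupp hx hT hnear).trans_eq ?_
  rw [trinomialBound]
  push_cast
  ring

end Trinomials

lemma trinomialBound_nonneg (p d : ℕ) [hp : Fact p.Prime] (hd : 0 < d) :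
    0 ≤ trinomialBound p d := by
  have hpd : (1 : ℝ) ≤ (p : ℝ) ^ d := one_le_pow₀ (by exact_mod_cast hp.out.one_le)
  exact mul_nonneg (mul_nonneg zero_le_two (sub_nonneg.mpr hpd))
    (discBound_nonneg p d hp.out.one_lt hd)

section Torus

variable {F : Type*} [Field F]

lemma zpow_mul_zpow_zpow_mul {a b : F} (ha : a ≠ 0) (hb : b ≠ 0) (i j k l m n : ℤ) :
    (a ^ i * b ^ j) ^ k * (a ^ l * b ^ m) ^ n = a ^ (i * k + l * n) * b ^ (j * k + m * n) := by
  rw [mul_zpow, mul_zpow, ← zpow_mul, ← zpow_mul, ← zpow_mul, ← zpow_mul, zpow_add₀ ha,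
    zpow_add₀ hb]
  ring

lemma exists_trinomial_eval_eq_zpow (α β γ : F) (i j k : ℤ) :
    ∃ (P : F[X]) (N : ℕ), P.support.card ≤ 3 ∧
      ∀ t ≠ 0, P.eval t = t ^ N * (α * t ^ i + β * t ^ j + γ * t ^ k) := by
  let N := i.natAbs + j.natAbs + k.natAbs
  have hshift : ∀ l : ℤ, 0 ≤ N + l → ∀ t : F, t ≠ 0 → t ^ (N + l).toNat = t ^ N * t ^ l := by
    intro l hl t ht
    rw [← zpow_natCast, Int.toNat_of_nonneg hl, zpow_add₀ ht, zpow_natCast]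
  refine ⟨C α * X ^ (N + i).toNat + C β * X ^ (N + j).toNat + C γ * X ^ (N + k).toNat, N,
    (Finset.card_le_card (support_trinomial_subset _ _ _ _ _ _)).trans Finset.card_le_three,
    fun t ht ↦ ?_⟩
  simp only [eval_add, eval_C_mul, eval_X_pow]
  rw [hshift i (by omega) t ht, hshift j (by omega) t ht, hshift k (by omega) t ht]
  ring

lemma zpow_mul_zpow_zpow_mul_eq_left {a b : F} (ha : a ≠ 0) (hb : b ≠ 0) {i j k l m n : ℤ}
    (h₁ : i * k + l * n = 1) (h₀ : j * k + m * n = 0) :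
    (a ^ i * b ^ j) ^ k * (a ^ l * b ^ m) ^ n = a := by
  rw [zpow_mul_zpow_zpow_mul ha hb, h₁, h₀, zpow_one, zpow_zero, mul_one]

lemma zpow_mul_zpow_zpow_mul_eq_right {a b : F} (ha : a ≠ 0) (hb : b ≠ 0) {i j k l m n : ℤ}
    (h₀ : i * k + l * n = 0) (h₁ : j * k + m * n = 1) :
    (a ^ i * b ^ j) ^ k * (a ^ l * b ^ m) ^ n = b := by
  rw [zpow_mul_zpow_zpow_mul ha hb, h₀, h₁, zpow_one, zpow_zero, one_mul]

lemma exists_trinomial_eval_eq_zero_iff (c d : F) (m n : ℕ) (w : F) (r s u v : ℤ) :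
    ∃ P : F[X], P.support.card ≤ 3 ∧ ∀ t ≠ 0, P.eval t = 0 ↔
      (C c * X ^ m + C d * X ^ n).eval (w ^ r * t ^ v) = w ^ s * t ^ u := by
  obtain ⟨P, N, hPsupp, hP⟩ := exists_trinomial_eval_eq_zpow
    (c * w ^ (r * m)) (d * w ^ (r * n)) (-w ^ s) (v * m) (v * n) u
  refine ⟨P, hPsupp, fun t ht ↦ ?_⟩
  rw [hP t ht, mul_eq_zero, or_iff_right (pow_ne_zero N ht), ← sub_eq_zero (b := w ^ s * _)]
  simp only [eval_add, eval_C_mul, eval_X_pow, mul_pow, zpow_mul, zpow_natCast]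
  ring_nf

/- With `r u + s v = 1` the monomial map `(x, y) ↦ (x ^ u y ^ v, x ^ s y ^ (-r))` is an automorphism
of the torus with inverse `(w, t) ↦ (w ^ r t ^ v, w ^ s t ^ (-u))`, so that `t` is a coordinate on
the fibre over `w`. -/
lemma exists_trinomial_bijOn_fiber {g : F[X]} {c d : F} {m n : ℕ}
    (hg : g = C c * X ^ m + C d * X ^ n) {u v : ℤ} (huv : IsCoprime u v) {w : F} (hw : w ≠ 0) :
    ∃ (P : F[X]) (ψ : F → F), P.support.card ≤ 3 ∧
      Set.BijOn ψ {t | t ≠ 0 ∧ P.eval t = 0}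
        {x | x ≠ 0 ∧ g.eval x ≠ 0 ∧ x ^ u * g.eval x ^ v = w} := by
  obtain ⟨r, s, hrs⟩ := huv
  obtain ⟨P, hPsupp, hP⟩ := exists_trinomial_eval_eq_zero_iff c d m n w r s (-u) v
  rw [← hg] at hP
  have hleft : Set.LeftInvOn (fun x ↦ x ^ s * g.eval x ^ (-r)) (fun t ↦ w ^ r * t ^ v)
      {t | t ≠ 0 ∧ P.eval t = 0} := by
    rintro t ⟨ht, hPt⟩
    dsimp only
    rw [(hP t ht).mp hPt]
    exact zpow_mul_zpow_zpow_mul_eq_right hw ht (by ring) (by linarith)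
  have hmaps : Set.MapsTo (fun t ↦ w ^ r * t ^ v) {t | t ≠ 0 ∧ P.eval t = 0}
      {x | x ≠ 0 ∧ g.eval x ≠ 0 ∧ x ^ u * g.eval x ^ v = w} := by
    rintro t ⟨ht, hPt⟩
    rw [Set.mem_ofPred_eq, (hP t ht).mp hPt]
    exact ⟨mul_ne_zero (zpow_ne_zero _ hw) (zpow_ne_zero _ ht),
      mul_ne_zero (zpow_ne_zero _ hw) (zpow_ne_zero _ ht),
      zpow_mul_zpow_zpow_mul_eq_left hw ht (by linarith) (by ring)⟩
  refine ⟨P, fun t ↦ w ^ r * t ^ v, hPsupp, hmaps, hleft.injOn, ?_⟩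
  rintro x ⟨hx, hgx, rfl⟩
  have ht : x ^ s * g.eval x ^ (-r) ≠ 0 := mul_ne_zero (zpow_ne_zero _ hx) (zpow_ne_zero _ hgx)
  have hxt : (x ^ u * g.eval x ^ v) ^ r * (x ^ s * g.eval x ^ (-r)) ^ v = x :=
    zpow_mul_zpow_zpow_mul_eq_left hx hgx (by linarith) (by ring)
  have hgt : (x ^ u * g.eval x ^ v) ^ s * (x ^ s * g.eval x ^ (-r)) ^ (-u) = g.eval x :=
    zpow_mul_zpow_zpow_mul_eq_right hx hgx (by ring) (by linarith)
  exact ⟨_, ⟨ht, (hP _ ht).mpr (by rw [hxt, hgt])⟩, hxt⟩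

lemma exists_isCoprime_zpow_mul_zpow_eq_pow {k l : ℤ} (hkl : k ≠ 0 ∨ l ≠ 0) :
    ∃ (u v : ℤ) (e : ℕ), IsCoprime u v ∧ e ≠ 0 ∧
      ∀ x y : F, x ^ k * y ^ l = (x ^ u * y ^ v) ^ e := by
  have hpos : 0 < k.gcd l := Int.gcd_pos_iff.mpr hkl
  obtain ⟨u, v, huv, hu, hv⟩ := Int.exists_gcd_one hpos
  refine ⟨u, v, k.gcd l, Int.isCoprime_iff_gcd_eq_one.mpr huv, hpos.ne', fun x y ↦ ?_⟩
  calc x ^ k * y ^ l = x ^ (u * k.gcd l) * y ^ (v * k.gcd l) := by rw [← hu, ← hv]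
    _ = (x ^ u * y ^ v) ^ k.gcd l := by
      rw [zpow_mul, zpow_mul, mul_pow, zpow_natCast, zpow_natCast]

end Torus

section RootCount

variable (p : ℕ) [hp : Fact p.Prime] {L : Type*} [NormedField L] [NormedAlgebra ℚ_[p] L]
  [IsUltrametricDist L] [FiniteDimensional ℚ_[p] L]

lemma ncard_torus_fiber_le_trinomialBound {g : L[X]} {c d : L} {m n : ℕ}
    (hg : g = C c * X ^ m + C d * X ^ n) {u v : ℤ} (huv : IsCoprime u v) {w : L} (hw : w ≠ 0)
    (hfin : {x | x ≠ 0 ∧ g.eval x ≠ 0 ∧ x ^ u * g.eval x ^ v = w}.Finite) :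
    ({x | x ≠ 0 ∧ g.eval x ≠ 0 ∧ x ^ u * g.eval x ^ v = w}.ncard : ℝ)
      ≤ trinomialBound p (Module.finrank ℚ_[p] L) := by
  have : CharZero L := charZero_of_injective_algebraMap (algebraMap ℚ_[p] L).injective
  obtain ⟨P, ψ, hPsupp, hψ⟩ := exists_trinomial_bijOn_fiber hg huv hw
  have hP : P ≠ 0 := by
    rintro rfl
    have hcompl : {t : L | t ≠ 0 ∧ (0 : L[X]).eval t = 0} = {0}ᶜ := by ext; simp
    rw [hcompl] at hψ
    exact (Set.finite_singleton (0 : L)).infinite_compl (hψ.finite_iff_finite.mpr hfin)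
  have hroots : {t | t ≠ 0 ∧ P.eval t = 0} = (nonzeroRoots P : Set L) := by
    ext
    simp [mem_nonzeroRoots, hP]
  rw [← hψ.image_eq, hψ.injOn.ncard_image, hroots, Set.ncard_coe_finset]
  exact card_nonzeroRoots_trinomial_le p hPsupp

lemma card_torus_level_set_le {g : L[X]} {c d : L} {m n : ℕ}
    (hg : g = C c * X ^ m + C d * X ^ n) {k l : ℤ} (hkl : k ≠ 0 ∨ l ≠ 0) {κ : L} {S : Finset L}
    (hS : ∀ x, x ∈ S ↔ x ≠ 0 ∧ g.eval x ≠ 0 ∧ x ^ k * g.eval x ^ l = κ) :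
    (S.card : ℝ) ≤ binomialBound p (Module.finrank ℚ_[p] L) *
      trinomialBound p (Module.finrank ℚ_[p] L) := by
  classical
  obtain ⟨u, v, e, huv, he, hpow⟩ := exists_isCoprime_zpow_mul_zpow_eq_pow (F := L) hkl
  simp only [hpow] at hS
  have hne : ∀ x ∈ S, x ^ u * g.eval x ^ v ≠ 0 := fun x hx ↦
    mul_ne_zero (zpow_ne_zero u ((hS x).mp hx).1) (zpow_ne_zero v ((hS x).mp hx).2.1)
  refine card_le_mul_of_card_fiber_le (f := fun x ↦ x ^ u * g.eval x ^ v)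
    (card_le_binomialBound_of_pow_eq p he (κ := κ) ?_)
    (trinomialBound_nonneg p _ Module.finrank_pos) fun x hx ↦ ?_
  · exact Finset.forall_mem_image.mpr fun x hx ↦ ⟨hne x hx, ((hS x).mp hx).2.2⟩
  · have hfiber : (S.filter fun y ↦ y ^ u * g.eval y ^ v = x ^ u * g.eval x ^ v : Set L)
        = {y | y ≠ 0 ∧ g.eval y ≠ 0 ∧ y ^ u * g.eval y ^ v = x ^ u * g.eval x ^ v} := by
      ext y
      rw [Finset.mem_coe, Finset.mem_filter, hS, Set.mem_ofPred_eq]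
      refine ⟨fun h ↦ ⟨h.1.1, h.1.2.1, h.2⟩, fun h ↦ ⟨⟨h.1, h.2.1, ?_⟩, h.2.2⟩⟩
      rw [h.2.2]
      exact ((hS x).mp hx).2.2
    rw [← Set.ncard_coe_finset, hfiber]
    exact ncard_torus_fiber_le_trinomialBound p hg huv (hne x hx)
      (hfiber ▸ Finset.finite_toSet _)

open Classical in
lemma card_filter_eval_ne_zero_nonzeroRoots_le {g : L[X]} {c d : L} {m n : ℕ}
    (hg : g = C c * X ^ m + C d * X ^ n) (c' d' : L) (k l k' l' : ℕ) :
    (((nonzeroRoots (C c' * (X ^ k * g ^ l) + C d' * (X ^ k' * g ^ l'))).filter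
        (g.eval · ≠ 0)).card : ℝ) ≤ binomialBound p (Module.finrank ℚ_[p] L) *
      trinomialBound p (Module.finrank ℚ_[p] L) := by
  set h := C c' * (X ^ k * g ^ l) + C d' * (X ^ k' * g ^ l') with hh
  obtain hS | ⟨x, hx⟩ := ((nonzeroRoots h).filter (g.eval · ≠ 0)).eq_empty_or_nonempty
  · rw [hS, Finset.card_empty, Nat.cast_zero]
    exact mul_nonneg (binomialBound_nonneg p _) (trinomialBound_nonneg p _ Module.finrank_pos)
  have hmonomial : ∀ y ≠ 0, g.eval y ≠ 0 → ∀ a b : ℕ, (X ^ a * g ^ b).eval y ≠ 0 := by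
    intro y hy hgy a b
    rw [eval_mul, eval_pow, eval_pow, eval_X]
    exact mul_ne_zero (pow_ne_zero a hy) (pow_ne_zero b hgy)
  obtain ⟨hxh, hgx⟩ := Finset.mem_filter.mp hx
  obtain ⟨hx0, hne, -⟩ := mem_nonzeroRoots.mp hxh
  obtain ⟨hmon, hc'⟩ := ne_of_mem_nonzeroRoots_add hxh (hmonomial x hx0 hgx k l)
    (hmonomial x hx0 hgx k' l')
  have hkl : (k : ℤ) - k' ≠ 0 ∨ (l : ℤ) - l' ≠ 0 := by
    by_contra! hzero
    obtain ⟨rfl, rfl⟩ : k = k' ∧ l = l' := by omega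
    exact hmon rfl
  refine card_torus_level_set_le p hg hkl (κ := -d' / c') fun y ↦ ?_
  rw [Finset.mem_filter, mem_nonzeroRoots, and_assoc]
  refine and_congr_right fun hy ↦ ?_
  rw [and_assoc, and_iff_right hne, and_comm]
  refine and_congr_right fun hgy ↦ ?_
  rw [hh, eval_add_eq_zero_iff_eval_div_eval_eq hc' (hmonomial y hy hgy k' l'), zpow_sub₀ hy,
    zpow_sub₀ hgy, div_mul_div_comm]
  simp only [eval_mul, eval_pow, eval_X, zpow_natCast]

open Classical in
lemma card_union_nonzeroRoots_le {g : L[X]} {c d : L} {m n : ℕ}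
    (hg : g = C c * X ^ m + C d * X ^ n) (c' d' : L) (k l k' l' : ℕ) :
    ((nonzeroRoots g ∪ nonzeroRoots (C c' * (X ^ k * g ^ l) + C d' * (X ^ k' * g ^ l'))).card : ℝ)
      ≤ binomialBound p (Module.finrank ℚ_[p] L) + binomialBound p (Module.finrank ℚ_[p] L) *
        trinomialBound p (Module.finrank ℚ_[p] L) := by
  set h := C c' * (X ^ k * g ^ l) + C d' * (X ^ k' * g ^ l') with hh
  obtain hg0 | hg0 := eq_or_ne g 0
  · have hbinom : h = C (c' * 0 ^ l) * X ^ k + C (d' * 0 ^ l') * X ^ k' := by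
      rw [hh, hg0]
      simp only [C_mul, C_pow, C_0]
      ring
    have hempty : nonzeroRoots g = ∅ := by simp [hg0, nonzeroRoots]
    rw [hempty, Finset.empty_union, hbinom]
    exact (card_nonzeroRoots_binomial_le p _ _ _ _).trans (le_add_of_nonneg_right
      (mul_nonneg (binomialBound_nonneg p _) (trinomialBound_nonneg p _ Module.finrank_pos)))
  · have hsubset : nonzeroRoots g ∪ nonzeroRoots h
        ⊆ nonzeroRoots g ∪ (nonzeroRoots h).filter (g.eval · ≠ 0) := by
      refine Finset.union_subset Finset.subset_union_left fun x hx ↦ ?_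
      rw [Finset.mem_union, Finset.mem_filter, mem_nonzeroRoots]
      have hx0 := (mem_nonzeroRoots.mp hx).1
      tauto
    calc ((nonzeroRoots g ∪ nonzeroRoots h).card : ℝ)
        ≤ (nonzeroRoots g).card + ((nonzeroRoots h).filter (g.eval · ≠ 0)).card := by
          exact_mod_cast (Finset.card_le_card hsubset).trans (Finset.card_union_le _ _)
      _ ≤ _ := by
          refine add_le_add ?_ (card_filter_eval_ne_zero_nonzeroRoots_le p hg c' d' k l k' l')
          rw [hg]
          exact card_nonzeroRoots_binomial_le p c d m n

lemma HasAddComplexityPres.card_nonzeroRoots_le_of_le_one {f : L[X]} {s : ℕ}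
    (hf : HasAddComplexityPres f s) (hs : s ≤ 1) :
    ((nonzeroRoots f).card : ℝ) ≤ binomialBound p (Module.finrank ℚ_[p] L) := by
  obtain ⟨c, d, m, n, hsubset⟩ := hf.exists_nonzeroRoots_subset_of_le_one hs
  exact (Nat.cast_le.mpr (Finset.card_le_card hsubset)).trans
    (card_nonzeroRoots_binomial_le p c d m n)

lemma HasAddComplexityPres.card_nonzeroRoots_le_of_le_two {f : L[X]} {s : ℕ}
    (hf : HasAddComplexityPres f s) (hs : s ≤ 2) :
    ((nonzeroRoots f).card : ℝ)
      ≤ binomialBound p (Module.finrank ℚ_[p] L) + binomialBound p (Module.finrank ℚ_[p] L) *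
        trinomialBound p (Module.finrank ℚ_[p] L) := by
  classical
  obtain ⟨g, ⟨c, d, m, n, hg⟩, c', d', k, l, k', l', hor⟩ :=
    hf.exists_mem_nonzeroRoots_or_of_le_two hs
  exact (Nat.cast_le.mpr (Finset.card_le_card fun x hx ↦ Finset.mem_union.mpr (hor x hx))).trans
    (card_union_nonzeroRoots_le p hg c' d' k l k' l')

end RootCount

theorem padic_root_count_low_additive_complexity
    (p : ℕ) [hp : Fact p.Prime] (L : Type*) [Field L] [Algebra ℚ_[p] L]
    [FiniteDimensional ℚ_[p] L] (d : ℕ) (hd : Module.finrank ℚ_[p] L = d)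
    (c : ℝ) (hc : c = Real.exp 1 / (Real.exp 1 - 1))
    (f : L[X]) (hf : f ≠ 0) :
    (addComplexity f ≤ 1 →
      ({x : L | f.eval x = 0}.ncard : ℝ) ≤
        1 + (d * p * ((p : ℝ) ^ d - 1)) / ((p : ℝ) - 1)) ∧
    (addComplexity f ≤ 2 →
      ({x : L | f.eval x = 0}.ncard : ℝ) ≤
        1 + (d * p * ((p : ℝ) ^ d - 1)) / ((p : ℝ) - 1)
        + (4 * c * d * p * ((p : ℝ) ^ d - 1) ^ 2 / ((p : ℝ) - 1))
            * (1 + d * logb p (2 * d / Real.log p))) := by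
  let := spectralNorm.normedField ℚ_[p] L
  let := spectralNorm.normedAlgebra ℚ_[p] L
  have : IsUltrametricDist L := .of_normedAlgebra ℚ_[p]
  have hzero : ({x : L | f.eval x = 0}.ncard : ℝ) ≤ 1 + (nonzeroRoots f).card := by
    rw [add_comm]
    exact_mod_cast ncard_setOf_eval_eq_zero_le hf
  have hpres := hasAddComplexityPres_addComplexity f
  subst hd hc
  refine ⟨fun h ↦ hzero.trans ?_, fun h ↦ hzero.trans ?_⟩
  · gcongr
    exact hpres.card_nonzeroRoots_le_of_le_one p h
  · rw [add_assoc]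
    gcongr
    refine (hpres.card_nonzeroRoots_le_of_le_two p h).trans_eq ?_
    rw [trinomialBound, discBound, binomialBound]
    ring
end

section
/- Let α, β, γ, δ, ε, λ, μ, ν be nonnegative integers and c_1, d_1, c_2, d_2, c_3 ∈ ℚ_2. If the polynomial f(x) = c_3·x^α·(c_1·x^β + d_1·x^γ)^δ·[c_2·(c_1·x^β + d_1·x^γ)^ε + d_2·x^λ·(c_1·x^β + d_1·x^γ)^μ]^ν is not identically zero, then f has at most 35 distinct roots in ℚ_2 (and hence at most 35 distinct rational roots). -/
open Polynomial

/-!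
Write `g x = c₁ * x ^ β + d₁ * x ^ γ`. Away from `0` and the zeros of `g`, the bracket vanishes
exactly when `g x ^ m = e * x ^ k`, where `m = ε - μ`, `k` is the exponent of the second summand
and `e = -d₂ / c₂`. By the ultrametric inequality either both terms of `g x` have the same norm or
one of them dominates, and each alternative determines `‖x‖`: three norms are possible. For a fixed
norm, the residues modulo `4` of `x` and of `g x` (suitably normalised) leave four classes.

Inside one class, quotients `u = x / y` and `v = g x / g y` of two solutions lie in the torsion-free
group `1 + 4ℤ₂` and satisfy `v ^ m = u ^ k`; one may take `m` and `k` coprime, and then `u = t ^ m`,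
`v = t ^ k`. In the variable `t` the equation becomes a trinomial vanishing at `t = 1`, which has at
most one further zero because `(t ^ a - 1) / (t ^ b - 1)` is injective on `1 + 4ℤ₂` without `1`.
(If an exponent of the trinomial degenerates, `g x / x ^ β` or `g x / x ^ γ` has a prescribed `m`-th
power, and there are at most four solutions altogether.) This gives `3 * 4 * 2 = 24` solutions, to
which one adds `0` and the at most two nonzero zeros of `g`.
-/

lemma int_induction_of_iff {P : ℤ → Prop} (zero : P 0) (step : ∀ n, P (n + 1) ↔ P n)
    (n : ℤ) : P n :=
  Int.induction_on n zero (fun i => (step i).mpr)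
    fun i hi => (step _).mp (by simpa using hi)

lemma int_even_odd_induction {P : ℤ → Prop} (zero : P 0) (odd : ∀ n, Odd n → P n)
    (two_mul : ∀ n, n ≠ 0 → P n → P (2 * n)) (n : ℤ) : P n := by
  induction hk : n.natAbs using Nat.strong_induction_on generalizing n with
  | _ k ih =>
    obtain rfl | hn := eq_or_ne n 0
    · exact zero
    obtain ⟨m, rfl | rfl⟩ := Int.even_or_odd' n
    · exact two_mul m (by omega) (ih m.natAbs (by omega) m rfl)
    · exact odd _ (by simp)

lemma zpow_sub_eq_div_of_mul_zpow_eq {G₀ : Type*} [CommGroupWithZero G₀] {a b x : G₀} {i j : ℤ}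
    (ha : a ≠ 0) (hx : x ≠ 0) (h : a * x ^ i = b * x ^ j) : x ^ (i - j) = b / a := by
  rw [zpow_sub₀ hx, div_eq_div_iff (zpow_ne_zero j hx) ha, mul_comm, h]

lemma norm_add_eq_left_of_norm_lt {S : Type*} [SeminormedAddGroup S] [IsUltrametricDist S]
    {x y : S} (h : ‖y‖ < ‖x‖) : ‖x + y‖ = ‖x‖ := by
  rw [IsUltrametricDist.norm_add_eq_max_of_norm_ne_norm h.ne', max_eq_left h.le]

lemma norm_sub_le_of_norm_le {S : Type*} [SeminormedAddGroup S] [IsUltrametricDist S]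
    {x y : S} {r : ℝ} (hx : ‖x‖ ≤ r) (hy : ‖y‖ ≤ r) : ‖x - y‖ ≤ r := by
  rw [sub_eq_add_neg]
  exact (IsUltrametricDist.norm_add_le_max x (-y)).trans (max_le hx (by rwa [norm_neg]))

lemma norm_add_le_iff_of_norm_le {S : Type*} [SeminormedAddGroup S] [IsUltrametricDist S]
    {x y : S} {r : ℝ} (hy : ‖y‖ ≤ r) : ‖x + y‖ ≤ r ↔ ‖x‖ ≤ r :=
  ⟨fun h => by simpa using norm_sub_le_of_norm_le h hy,
    fun h => (IsUltrametricDist.norm_add_le_max x y).trans (max_le h hy)⟩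

lemma norm_eq_norm_or_norm_add_eq {S : Type*} [SeminormedAddGroup S] [IsUltrametricDist S]
    (x y : S) : ‖x‖ = ‖y‖ ∨ ‖x + y‖ = ‖x‖ ∨ ‖x + y‖ = ‖y‖ := by
  by_cases h : ‖x‖ = ‖y‖
  · exact .inl h
  · rw [IsUltrametricDist.norm_add_eq_max_of_norm_ne_norm h]
    exact .inr (max_choice _ _)

lemma norm_two_padic : ‖(2 : ℚ_[2])‖ = 1 / 2 := by
  simpa using Padic.norm_p (p := 2)

lemma norm_intCast_of_odd {n : ℤ} (hn : Odd n) : ‖(n : ℚ_[2])‖ = 1 := by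
  rw [Padic.norm_intCast_eq_one_iff]
  exact_mod_cast Int.isCoprime_two_right.mpr hn

lemma norm_four_mul_intCast_le (n : ℤ) : ‖(4 * n : ℚ_[2])‖ ≤ 1 / 4 := by
  have h4 : ‖(4 : ℚ_[2])‖ = 1 / 4 := by
    rw [show (4 : ℚ_[2]) = 2 * 2 by norm_num, norm_mul, norm_two_padic]; norm_num
  rw [norm_mul, h4]
  exact mul_le_of_le_one_right (by norm_num) (Padic.norm_int_le_one n)

/-- Membership in the multiplicative group `1 + 4ℤ₂`. It is torsion-free and has index two in the
units of `ℤ₂`, which is why residues modulo `4` rather than `2` are used. -/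
def IsOneModFour (x : ℚ_[2]) : Prop := ‖x - 1‖ ≤ 1 / 4

lemma isOneModFour_or_isOneModFour_neg {x : ℚ_[2]} (hx : ‖x‖ = 1) :
    IsOneModFour x ∨ IsOneModFour (-x) := by
  obtain ⟨k, hk⟩ : ∃ k : ℤ, ‖x - k‖ ≤ 1 / 4 := by
    have := (PadicInt.norm_le_pow_iff_mem_span_pow _ 2).mpr (PadicInt.appr_spec 2 ⟨x, hx.le⟩)
    refine ⟨(PadicInt.appr ⟨x, hx.le⟩ 2 : ℕ), ?_⟩
    norm_num at this ⊢
    exact this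
  have hkodd : Odd k := by
    rw [← Int.isCoprime_two_right]
    have : ‖(k : ℚ_[2])‖ = 1 := by
      rw [← hx, ← sub_sub_cancel x (k : ℚ_[2]), sub_eq_add_neg x (x - k)]
      apply norm_add_eq_left_of_norm_lt
      rw [norm_neg, hx]; linarith
    exact_mod_cast Padic.norm_intCast_eq_one_iff.mp this
  obtain ⟨j, rfl | rfl⟩ : ∃ j, k = 4 * j + 1 ∨ k = 4 * j - 1 := by
    obtain ⟨i, rfl⟩ := hkodd
    obtain ⟨j, rfl | rfl⟩ := Int.even_or_odd' i
    exacts [⟨j, .inl (by ring)⟩, ⟨j + 1, .inr (by ring)⟩]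
  · left
    have : x - 1 = x - (4 * j + 1 : ℤ) + 4 * j := by push_cast; ring
    rw [IsOneModFour, this, norm_add_le_iff_of_norm_le (norm_four_mul_intCast_le j)]
    exact hk
  · right
    have : -x - 1 = -(x - (4 * j - 1 : ℤ)) - 4 * j := by push_cast; ring
    rw [IsOneModFour, this]
    exact norm_sub_le_of_norm_le (by rwa [norm_neg]) (norm_four_mul_intCast_le j)

namespace IsOneModFour

variable {s t : ℚ_[2]}

lemma one : IsOneModFour 1 := by simp [IsOneModFour]

lemma norm_eq_one (ht : IsOneModFour t) : ‖t‖ = 1 := by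
  have : ‖t - 1‖ < ‖(1 : ℚ_[2])‖ := by rw [norm_one]; exact ht.trans_lt (by norm_num)
  simpa using norm_add_eq_left_of_norm_lt this

lemma ne_zero (ht : IsOneModFour t) : t ≠ 0 := by
  rw [← norm_ne_zero_iff, ht.norm_eq_one]
  exact one_ne_zero

lemma mul (hs : IsOneModFour s) (ht : IsOneModFour t) : IsOneModFour (s * t) := by
  have : s * t - 1 = s * (t - 1) + (s - 1) := by ring
  rw [IsOneModFour, this, norm_add_le_iff_of_norm_le hs, norm_mul, hs.norm_eq_one, one_mul]
  exact ht

lemma inv (ht : IsOneModFour t) : IsOneModFour t⁻¹ := by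
  have : t⁻¹ - 1 = -(t⁻¹ * (t - 1)) := by field_simp [ht.ne_zero]; ring
  rw [IsOneModFour, this, norm_neg, norm_mul, norm_inv, ht.norm_eq_one, inv_one, one_mul]
  exact ht

lemma pow (ht : IsOneModFour t) : ∀ n : ℕ, IsOneModFour (t ^ n)
  | 0 => by rw [pow_zero]; exact one
  | n + 1 => by rw [pow_succ]; exact (pow ht n).mul ht

lemma zpow (ht : IsOneModFour t) : ∀ n : ℤ, IsOneModFour (t ^ n)
  | (n : ℕ) => by rw [zpow_natCast]; exact ht.pow n
  | .negSucc n => by rw [zpow_negSucc]; exact (ht.pow _).inv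

lemma norm_add_eq_half (hs : IsOneModFour s) (ht : IsOneModFour t) : ‖s + t‖ = 1 / 2 := by
  have : s + t = 2 + ((s - 1) + (t - 1)) := by ring
  rw [this, norm_add_eq_left_of_norm_lt, norm_two_padic]
  exact ((norm_add_le_iff_of_norm_le ht).mpr hs).trans_lt (by rw [norm_two_padic]; norm_num)

end IsOneModFour

section Zgeom

variable {K : Type*} [Field K] {t : K}

/-- The geometric sum `1 + t + ⋯ + t ^ (n - 1)`, extended to integers `n` by its closed form.
At `t = 1` it takes the junk value `0` instead of `n`. -/
def zgeom (n : ℤ) (t : K) : K := (t ^ n - 1) / (t - 1)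

lemma sub_one_mul_zgeom (ht1 : t ≠ 1) (n : ℤ) : (t - 1) * zgeom n t = t ^ n - 1 :=
  mul_div_cancel₀ _ (sub_ne_zero.mpr ht1)

lemma zgeom_add_one (ht : t ≠ 0) (ht1 : t ≠ 1) (n : ℤ) :
    zgeom (n + 1) t = t * zgeom n t + 1 := by
  have := sub_ne_zero.mpr ht1
  rw [zgeom, zgeom, zpow_add_one₀ ht]
  field_simp
  ring

lemma zgeom_two_mul (n : ℤ) (t : K) :
    zgeom (2 * n) t = (t ^ n + 1) * zgeom n t := by
  rw [zgeom, zgeom, mul_comm 2, zpow_mul]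
  norm_cast
  rw [mul_div_assoc']
  ring

end Zgeom

namespace IsOneModFour

variable {s t : ℚ_[2]}

lemma norm_zgeom_sub_le (ht : IsOneModFour t) (ht1 : t ≠ 1) (n : ℤ) :
    ‖zgeom n t - n‖ ≤ 1 / 4 := by
  induction n using int_induction_of_iff with
  | zero => simp [zgeom]
  | step n =>
    have hadd : zgeom (n + 1) t - (n + 1 : ℤ) = t * (zgeom n t - n) + (t - 1) * n := by
      rw [zgeom_add_one ht.ne_zero ht1]; push_cast; ring
    have hn : ‖(t - 1) * (n : ℚ_[2])‖ ≤ 1 / 4 := by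
      rw [norm_mul]
      exact (mul_le_of_le_one_right (norm_nonneg _) (Padic.norm_int_le_one n)).trans ht
    rw [hadd, norm_add_le_iff_of_norm_le hn, norm_mul, ht.norm_eq_one, one_mul]

lemma norm_zgeom_le_one (ht : IsOneModFour t) (ht1 : t ≠ 1) (n : ℤ) : ‖zgeom n t‖ ≤ 1 := by
  rw [← sub_add_cancel (zgeom n t) n, norm_add_le_iff_of_norm_le (Padic.norm_int_le_one n)]
  exact (ht.norm_zgeom_sub_le ht1 n).trans (by norm_num)

lemma norm_zgeom (ht : IsOneModFour t) (ht1 : t ≠ 1) (n : ℤ) : ‖zgeom n t‖ = ‖(n : ℚ_[2])‖ := by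
  induction n using int_even_odd_induction with
  | zero => simp [zgeom]
  | odd n hn =>
    rw [← add_sub_cancel (n : ℚ_[2]) (zgeom n t)]
    apply norm_add_eq_left_of_norm_lt
    rw [norm_intCast_of_odd hn]
    exact (ht.norm_zgeom_sub_le ht1 n).trans_lt (by norm_num)
  | two_mul n _ ih =>
    rw [zgeom_two_mul, norm_mul, (ht.zpow n).norm_add_eq_half .one, ih]
    push_cast
    rw [norm_mul, norm_two_padic]

lemma norm_zpow_sub_zpow (hs : IsOneModFour s) (ht : IsOneModFour t) (n : ℤ) :
    ‖s ^ n - t ^ n‖ = ‖(n : ℚ_[2])‖ * ‖s - t‖ := by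
  obtain rfl | hst := eq_or_ne s t
  · simp
  have hr : IsOneModFour (s * t⁻¹) := hs.mul ht.inv
  have hr1 : s * t⁻¹ ≠ 1 := by rwa [ne_eq, mul_inv_eq_one₀ ht.ne_zero]
  have ht0 := ht.ne_zero
  have hfactor : s ^ n - t ^ n = t ^ n * ((s - t) * t⁻¹ * zgeom n (s * t⁻¹)) := by
    rw [sub_mul, mul_inv_cancel₀ ht0, sub_one_mul_zgeom hr1, mul_zpow, inv_zpow]
    field_simp
  simp only [hfactor, norm_mul, (ht.zpow n).norm_eq_one, norm_inv, ht.norm_eq_one,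
    hr.norm_zgeom hr1]
  ring

lemma zpow_left_injective (hs : IsOneModFour s) (ht : IsOneModFour t) {n : ℤ} (hn : n ≠ 0)
    (h : s ^ n = t ^ n) : s = t := by
  have := hs.norm_zpow_sub_zpow ht n
  simpa [h, hn, sub_eq_zero] using this.symm

lemma zpow_sub_one_ne_zero (ht : IsOneModFour t) (ht1 : t ≠ 1) {n : ℤ} (hn : n ≠ 0) :
    t ^ n - 1 ≠ 0 := fun h =>
  ht1 (ht.zpow_left_injective .one hn (by rwa [one_zpow, ← sub_eq_zero]))

lemma norm_zgeom_sub_zgeom_le (hs : IsOneModFour s) (ht : IsOneModFour t) (hs1 : s ≠ 1)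
    (ht1 : t ≠ 1) (n : ℤ) : ‖zgeom n s - zgeom n t‖ ≤ ‖s - t‖ := by
  induction n using int_induction_of_iff with
  | zero => simp [zgeom]
  | step n =>
    have hadd : zgeom (n + 1) s - zgeom (n + 1) t =
        s * (zgeom n s - zgeom n t) + (s - t) * zgeom n t := by
      rw [zgeom_add_one hs.ne_zero hs1, zgeom_add_one ht.ne_zero ht1]; ring
    have hn : ‖(s - t) * zgeom n t‖ ≤ ‖s - t‖ := by
      rw [norm_mul]
      exact mul_le_of_le_one_right (norm_nonneg _) (ht.norm_zgeom_le_one ht1 n)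
    rw [hadd, norm_add_le_iff_of_norm_le hn, norm_mul, hs.norm_eq_one, one_mul]

lemma norm_zgeom_two_mul_sub (hs : IsOneModFour s) (ht : IsOneModFour t) (hs1 : s ≠ 1)
    (ht1 : t ≠ 1) (n : ℤ) :
    ‖zgeom (2 * n) s - zgeom (2 * n) t‖ = ‖(n : ℚ_[2])‖ * ‖s - t‖ := by
  obtain rfl | hst := eq_or_ne s t
  · simp
  have hpos : 0 < ‖s - t‖ := norm_pos_iff.mpr (sub_ne_zero.mpr hst)
  have hsplit (n : ℤ) : zgeom (2 * n) s - zgeom (2 * n) t =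
      (s ^ n - t ^ n) * zgeom n s + (t ^ n + 1) * (zgeom n s - zgeom n t) := by
    rw [zgeom_two_mul, zgeom_two_mul]; ring
  have hfst (n : ℤ) : ‖(s ^ n - t ^ n) * zgeom n s‖ = ‖(n : ℚ_[2])‖ ^ 2 * ‖s - t‖ := by
    rw [norm_mul, hs.norm_zpow_sub_zpow ht, hs.norm_zgeom hs1]; ring
  have hsnd (n : ℤ) : ‖(t ^ n + 1) * (zgeom n s - zgeom n t)‖ =
      1 / 2 * ‖zgeom n s - zgeom n t‖ := by
    rw [norm_mul, (ht.zpow n).norm_add_eq_half .one]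
  induction n using int_even_odd_induction with
  | zero => simp [zgeom]
  | odd n hn =>
    have hlip := hs.norm_zgeom_sub_zgeom_le ht hs1 ht1 n
    rw [hsplit, norm_add_eq_left_of_norm_lt, hfst, norm_intCast_of_odd hn, one_pow]
    rw [hfst, hsnd, norm_intCast_of_odd hn]
    linarith
  | two_mul n hn ih =>
    have hn0 : 0 < ‖(n : ℚ_[2])‖ := norm_pos_iff.mpr (by exact_mod_cast hn)
    have hn1 := Padic.norm_int_le_one (p := 2) n
    have h2n : ‖((2 * n : ℤ) : ℚ_[2])‖ = 1 / 2 * ‖(n : ℚ_[2])‖ := by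
      push_cast; rw [norm_mul, norm_two_padic]
    rw [hsplit, add_comm, norm_add_eq_left_of_norm_lt, hsnd, ih, h2n, mul_assoc]
    rw [hfst, hsnd, ih, h2n, ← mul_assoc]
    gcongr
    nlinarith

end IsOneModFour

lemma injOn_zpow_sub_one_div_of_even_of_odd {a b : ℤ} (ha : Even a) (ha0 : a ≠ 0) (hb : Odd b) :
    Set.InjOn (fun t : ℚ_[2] => (t ^ a - 1) / (t ^ b - 1)) {t | IsOneModFour t ∧ t ≠ 1} := by
  rintro s ⟨hs, hs1⟩ t ⟨ht, ht1⟩ hst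
  obtain ⟨n, rfl⟩ := even_iff_exists_two_mul.mp ha
  by_contra hne
  have hquot {t : ℚ_[2]} (ht1 : t ≠ 1) :
      (t ^ (2 * n) - 1) / (t ^ b - 1) = zgeom (2 * n) t / zgeom b t := by
    rw [zgeom, zgeom, div_div_div_cancel_right₀ (sub_ne_zero.mpr ht1)]
  have hb0 {t : ℚ_[2]} (ht : IsOneModFour t) (ht1 : t ≠ 1) : zgeom b t ≠ 0 := by
    rw [← norm_ne_zero_iff, ht.norm_zgeom ht1, norm_intCast_of_odd hb]
    exact one_ne_zero
  have hcross : zgeom (2 * n) s * zgeom b t = zgeom (2 * n) t * zgeom b s := by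
    rwa [← div_eq_div_iff (hb0 hs hs1) (hb0 ht ht1), ← hquot hs1, ← hquot ht1]
  -- The left side has norm `‖n‖ * ‖s - t‖`, the right side at most half of that.
  have hdiff : (zgeom (2 * n) s - zgeom (2 * n) t) * zgeom b t =
      zgeom (2 * n) t * (zgeom b s - zgeom b t) := by
    linear_combination hcross
  have hnorm := congrArg norm hdiff
  rw [norm_mul, norm_mul, hs.norm_zgeom_two_mul_sub ht hs1 ht1, ht.norm_zgeom ht1,
    ht.norm_zgeom ht1, norm_intCast_of_odd hb, mul_one] at hnorm
  have hlip := hs.norm_zgeom_sub_zgeom_le ht hs1 ht1 b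
  have hn : 0 < ‖(n : ℚ_[2])‖ := norm_pos_iff.mpr (by exact_mod_cast (by omega : n ≠ 0))
  have hpos : 0 < ‖(n : ℚ_[2])‖ * ‖s - t‖ := mul_pos hn (norm_pos_iff.mpr (sub_ne_zero.mpr hne))
  push_cast at hnorm
  rw [norm_mul, norm_two_padic] at hnorm
  nlinarith

lemma injOn_zpow_sub_one_div_of_isCoprime {a b : ℤ} (ha : a ≠ 0) (hb : b ≠ 0) (hne : a ≠ b)
    (hab : IsCoprime a b) :
    Set.InjOn (fun t : ℚ_[2] => (t ^ a - 1) / (t ^ b - 1)) {t | IsOneModFour t ∧ t ≠ 1} := by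
  obtain ha' | ha' := Int.even_or_odd a <;> obtain hb' | hb' := Int.even_or_odd b
  · exact absurd (hab.isUnit_of_dvd' ha'.two_dvd hb'.two_dvd) (by decide)
  · exact injOn_zpow_sub_one_div_of_even_of_odd ha' ha hb'
  · intro s hs t ht hst
    refine injOn_zpow_sub_one_div_of_even_of_odd hb' hb ha' hs ht ?_
    simpa using congrArg (·⁻¹) hst
  · have hshift {t : ℚ_[2]} (ht : IsOneModFour t ∧ t ≠ 1) :
        (t ^ (a - b) - 1) / (t ^ (-b) - 1) = 1 - (t ^ a - 1) / (t ^ b - 1) := by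
      have ht0 := ht.1.ne_zero
      have htb := ht.1.zpow_sub_one_ne_zero ht.2 hb
      have htb' : 1 - t ^ b ≠ 0 := by rwa [← neg_ne_zero, neg_sub]
      have := zpow_ne_zero b ht0
      rw [zpow_sub₀ ht0, zpow_neg]
      field_simp
      ring
    intro s hs t ht hst
    refine injOn_zpow_sub_one_div_of_even_of_odd (ha'.sub_odd hb') (sub_ne_zero.mpr hne)
      hb'.neg hs ht ?_
    simp only [hshift hs, hshift ht]
    exact congrArg (1 - ·) hst

theorem injOn_zpow_sub_one_div {a b : ℤ} (ha : a ≠ 0) (hb : b ≠ 0) (hne : a ≠ b) :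
    Set.InjOn (fun t : ℚ_[2] => (t ^ a - 1) / (t ^ b - 1)) {t | IsOneModFour t ∧ t ≠ 1} := by
  obtain ⟨g, a, b, hg, hab, rfl, rfl⟩ :=
    Int.exists_gcd_one' (Int.gcd_pos_of_ne_zero_left b ha)
  rintro s ⟨hs, hs1⟩ t ⟨ht, ht1⟩ hst
  have hg' : (g : ℤ) ≠ 0 := by omega
  have hpow {t : ℚ_[2]} (ht : IsOneModFour t) (ht1 : t ≠ 1) :
      IsOneModFour (t ^ (g : ℤ)) ∧ t ^ (g : ℤ) ≠ 1 :=
    ⟨ht.zpow g, sub_ne_zero.mp (ht.zpow_sub_one_ne_zero ht1 hg')⟩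
  refine hs.zpow_left_injective ht hg' ?_
  refine injOn_zpow_sub_one_div_of_isCoprime (left_ne_zero_of_mul ha) (left_ne_zero_of_mul hb)
    (fun h => hne (by rw [h])) (Int.isCoprime_iff_gcd_eq_one.mpr hab) (hpow hs hs1)
    (hpow ht ht1) ?_
  simpa only [← zpow_mul, mul_comm (g : ℤ)] using hst

lemma IsOneModFour.eq_of_trinomial {s t : ℚ_[2]} {a b : ℤ} (ha : a ≠ 0) (hb : b ≠ 0) (hne : a ≠ b)
    {A B : ℚ_[2]} (hA : A ≠ 0) (hs : IsOneModFour s) (ht : IsOneModFour t) (hs1 : s ≠ 1)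
    (ht1 : t ≠ 1) (hsAB : A * (s ^ a - 1) + B * (s ^ b - 1) = 0)
    (htAB : A * (t ^ a - 1) + B * (t ^ b - 1) = 0) : s = t := by
  have hratio {t : ℚ_[2]} (ht : IsOneModFour t) (ht1 : t ≠ 1)
      (h : A * (t ^ a - 1) + B * (t ^ b - 1) = 0) : (t ^ a - 1) / (t ^ b - 1) = -B / A := by
    rw [div_eq_div_iff (ht.zpow_sub_one_ne_zero ht1 hb) hA]
    linear_combination h
  refine injOn_zpow_sub_one_div ha hb hne ⟨hs, hs1⟩ ⟨ht, ht1⟩ ?_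
  simp only [hratio hs hs1 hsAB, hratio ht ht1 htAB]

lemma IsOneModFour.exists_zpow_eq_of_isCoprime {u v : ℚ_[2]} {m k : ℤ} (hu : IsOneModFour u)
    (hv : IsOneModFour v) (hmk : IsCoprime m k) (h : v ^ m = u ^ k) :
    ∃ t, IsOneModFour t ∧ t ^ m = u ∧ t ^ k = v := by
  obtain ⟨a, b, hab⟩ := hmk
  refine ⟨u ^ a * v ^ b, (hu.zpow a).mul (hv.zpow b), ?_, ?_⟩
  · calc (u ^ a * v ^ b) ^ m = (u ^ m) ^ a * (v ^ m) ^ b := by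
          rw [mul_zpow, zpow_comm u, zpow_comm v]
      _ = u ^ (a * m + b * k) := by
          rw [h, ← zpow_mul, ← zpow_mul, ← zpow_add₀ hu.ne_zero]; ring_nf
      _ = u := by rw [hab, zpow_one]
  · calc (u ^ a * v ^ b) ^ k = (u ^ k) ^ a * (v ^ k) ^ b := by
          rw [mul_zpow, zpow_comm u, zpow_comm v]
      _ = v ^ (a * m + b * k) := by
          rw [← h, ← zpow_mul, ← zpow_mul, ← zpow_add₀ hv.ne_zero]; ring_nf
      _ = v := by rw [hab, zpow_one]

lemma card_le_two_mul_of_norm_eq {ι : Type*} {s : Finset ι} {f : ι → ℚ_[2]} {n : ℕ}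
    (hf : ∀ x ∈ s, f x ≠ 0) (hnorm : ∀ x ∈ s, ∀ y ∈ s, ‖f x‖ = ‖f y‖)
    (hclass : ∀ t ⊆ s, (∀ x ∈ t, ∀ y ∈ t, IsOneModFour (f x / f y)) → t.card ≤ n) :
    s.card ≤ 2 * n := by
  classical
  obtain rfl | ⟨z, hz⟩ := s.eq_empty_or_nonempty
  · simp
  have hfilter (p : ι → Prop) [DecidablePred p] (w : ℚ_[2]) (hw : w ≠ 0)
      (hp : ∀ x ∈ s, p x → IsOneModFour (f x / w)) : (s.filter p).card ≤ n := by
    refine hclass _ (Finset.filter_subset _ _) fun x hx y hy => ?_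
    rw [Finset.mem_filter] at hx hy
    rw [← div_div_div_cancel_right₀ hw, div_eq_mul_inv]
    exact (hp x hx.1 hx.2).mul (hp y hy.1 hy.2).inv
  have hpos := hfilter (fun x => IsOneModFour (f x / f z)) (f z) (hf z hz) fun _ _ h => h
  have hneg := hfilter (fun x => ¬ IsOneModFour (f x / f z)) (-f z) (neg_ne_zero.mpr (hf z hz))
    fun x hx h => by
      rw [div_neg]
      refine (isOneModFour_or_isOneModFour_neg ?_).resolve_left h
      rw [norm_div, hnorm x hx z hz, div_self (norm_ne_zero_iff.mpr (hf z hz))]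
  have := s.card_filter_add_card_filter_not (fun x => IsOneModFour (f x / f z))
  omega

lemma card_le_two_of_zpow_eq {n : ℤ} (hn : n ≠ 0) {e : ℚ_[2]} {s : Finset ℚ_[2]}
    (hs : ∀ x ∈ s, x ≠ 0 ∧ x ^ n = e) : s.card ≤ 2 := by
  refine card_le_two_mul_of_norm_eq (f := id) (n := 1) (fun x hx => (hs x hx).1) ?_ ?_
  · intro x hx y hy
    rw [id, id, ← zpow_left_inj₀ (norm_nonneg x) (norm_nonneg y) hn, ← norm_zpow, ← norm_zpow,
      (hs x hx).2, (hs y hy).2]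
  · intro t hts ht
    refine Finset.card_le_one.mpr fun x hx y hy => ?_
    obtain ⟨-, hxe⟩ := hs x (hts hx)
    obtain ⟨hy0, hye⟩ := hs y (hts hy)
    rw [← div_eq_one_iff_eq hy0]
    refine (ht x hx y hy).zpow_left_injective .one hn ?_
    rw [id, id, div_zpow, hxe, hye, one_zpow, div_self]
    exact hye ▸ zpow_ne_zero n hy0

/-- The two-term function `x ↦ c * x ^ β + d * x ^ γ`, playing the role of the inner binomial `g`.
The exponents are integers, in line with those of the curve `g x ^ m = e * x ^ k`, where `m` may be
negative; values at `x = 0` are junk for negative exponents. -/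
def laurentBinomial {K : Type*} [DivisionRing K] (c d : K) (β γ : ℤ) (x : K) : K :=
  c * x ^ β + d * x ^ γ

lemma laurentBinomial_swap {K : Type*} [DivisionRing K] (c d : K) (β γ : ℤ) :
    laurentBinomial d c γ β = laurentBinomial c d β γ :=
  funext fun _ => add_comm _ _

section Curve

variable {c d e : ℚ_[2]} {β γ m k : ℤ} {s : Finset ℚ_[2]}

lemma card_curve_class_le_two_of_isCoprime (hc : c ≠ 0) (hm : m ≠ 0) (hmk : IsCoprime m k)
    (hβγ : β ≠ γ) (hβ : k ≠ β * m) (hγ : k ≠ γ * m)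
    (hs : ∀ x ∈ s, x ≠ 0 ∧ laurentBinomial c d β γ x ≠ 0)
    (hclass : ∀ x ∈ s, ∀ y ∈ s, IsOneModFour (x / y) ∧
      IsOneModFour (laurentBinomial c d β γ x / laurentBinomial c d β γ y))
    (hcurve : ∀ x ∈ s, ∀ y ∈ s,
      (laurentBinomial c d β γ x / laurentBinomial c d β γ y) ^ m = (x / y) ^ k) :
    s.card ≤ 2 := by
  classical
  obtain rfl | ⟨y, hy⟩ := s.eq_empty_or_nonempty
  · simp
  obtain ⟨hy0, hgy⟩ := hs y hy
  have hparam : ∀ x ∈ s.erase y, ∃ t, IsOneModFour t ∧ t ≠ 1 ∧ x = t ^ m * y ∧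
      c * y ^ β * (t ^ (β * m - k) - 1) + d * y ^ γ * (t ^ (γ * m - k) - 1) = 0 := by
    intro x hx
    obtain ⟨hxy, hxs⟩ := Finset.mem_erase.mp hx
    obtain ⟨hu, hv⟩ := hclass x hxs y hy
    obtain ⟨t, ht, htu, htv⟩ := hu.exists_zpow_eq_of_isCoprime hv hmk (hcurve x hxs y hy)
    have hxt : x = t ^ m * y := by rw [htu, div_mul_cancel₀ _ hy0]
    refine ⟨t, ht, ?_, hxt, ?_⟩
    · rintro rfl
      exact hxy (by rw [hxt, one_zpow, one_mul])
    · have hgx : laurentBinomial c d β γ (t ^ m * y) = t ^ k * laurentBinomial c d β γ y := by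
        rw [← hxt, htv, div_mul_cancel₀ _ hgy]
      simp only [laurentBinomial, mul_zpow, ← zpow_mul, mul_comm m] at hgx
      have htk := zpow_ne_zero k ht.ne_zero
      rw [zpow_sub₀ ht.ne_zero, zpow_sub₀ ht.ne_zero]
      field_simp
      linear_combination hgx
  have hcard : (s.erase y).card ≤ 1 := by
    refine Finset.card_le_one.mpr fun x₁ hx₁ x₂ hx₂ => ?_
    obtain ⟨t₁, ht₁, hne₁, rfl, hzero₁⟩ := hparam x₁ hx₁
    obtain ⟨t₂, ht₂, hne₂, rfl, hzero₂⟩ := hparam x₂ hx₂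
    rw [ht₁.eq_of_trinomial (sub_ne_zero.mpr hβ.symm) (sub_ne_zero.mpr hγ.symm)
      (fun h => hβγ (mul_right_cancel₀ hm (sub_left_injective h)))
      (mul_ne_zero hc (zpow_ne_zero β hy0)) ht₂ hne₁ hne₂ hzero₁ hzero₂]
  have := s.pred_card_le_card_erase (a := y)
  omega

lemma card_curve_class_le_two (hc : c ≠ 0) (hm : m ≠ 0) (hβγ : β ≠ γ) (hβ : k ≠ β * m)
    (hγ : k ≠ γ * m) (hs : ∀ x ∈ s, x ≠ 0 ∧ laurentBinomial c d β γ x ≠ 0)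
    (hclass : ∀ x ∈ s, ∀ y ∈ s, IsOneModFour (x / y) ∧
      IsOneModFour (laurentBinomial c d β γ x / laurentBinomial c d β γ y))
    (hcurve : ∀ x ∈ s, ∀ y ∈ s,
      (laurentBinomial c d β γ x / laurentBinomial c d β γ y) ^ m = (x / y) ^ k) :
    s.card ≤ 2 := by
  obtain ⟨g, m, k, hg, hmk, rfl, rfl⟩ := Int.exists_gcd_one' (Int.gcd_pos_of_ne_zero_left k hm)
  have hg' : (g : ℤ) ≠ 0 := by omega
  refine card_curve_class_le_two_of_isCoprime hc (left_ne_zero_of_mul hm)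
    (Int.isCoprime_iff_gcd_eq_one.mpr hmk) hβγ (fun h => hβ (by rw [h, mul_assoc]))
    (fun h => hγ (by rw [h, mul_assoc])) hs hclass fun x hx y hy => ?_
  obtain ⟨hu, hv⟩ := hclass x hx y hy
  refine (hv.zpow m).zpow_left_injective (hu.zpow k) hg' ?_
  rw [← zpow_mul, ← zpow_mul, hcurve x hx y hy]

variable (hs : ∀ x ∈ s, x ≠ 0 ∧ laurentBinomial c d β γ x ≠ 0 ∧
  laurentBinomial c d β γ x ^ m = e * x ^ k)

include hs

lemma card_curve_le_eight_of_norm_eq (hc : c ≠ 0) (hm : m ≠ 0) (hβγ : β ≠ γ) (hβ : k ≠ β * m)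
    (hγ : k ≠ γ * m) (hnorm : ∀ x ∈ s, ∀ y ∈ s, ‖x‖ = ‖y‖) : s.card ≤ 8 := by
  refine card_le_two_mul_of_norm_eq (f := id) (n := 4) (fun x hx => (hs x hx).1) hnorm ?_
  intro t hts ht
  refine card_le_two_mul_of_norm_eq (f := laurentBinomial c d β γ) (n := 2)
    (fun x hx => (hs x (hts hx)).2.1) ?_ ?_
  · intro x hx y hy
    rw [← zpow_left_inj₀ (norm_nonneg _) (norm_nonneg _) hm, ← norm_zpow, ← norm_zpow,
      (hs x (hts hx)).2.2, (hs y (hts hy)).2.2, norm_mul, norm_mul, norm_zpow, norm_zpow,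
      hnorm x (hts hx) y (hts hy)]
  · intro r hrt hr
    refine card_curve_class_le_two hc hm hβγ hβ hγ
      (fun x hx => ⟨(hs x (hts (hrt hx))).1, (hs x (hts (hrt hx))).2.1⟩)
      (fun x hx y hy => ⟨ht x (hrt hx) y (hrt hy), hr x hx y hy⟩) fun x hx y hy => ?_
    obtain ⟨-, hgy, hycurve⟩ := hs y (hts (hrt hy))
    have he : e ≠ 0 := left_ne_zero_of_mul (hycurve ▸ zpow_ne_zero m hgy)
    rw [div_zpow, (hs x (hts (hrt hx))).2.2, hycurve, mul_div_mul_left _ _ he, div_zpow]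

lemma card_curve_le_twentyFour_of_ne (hc : c ≠ 0) (hd : d ≠ 0) (hm : m ≠ 0) (hβγ : β ≠ γ)
    (hβ : k ≠ β * m) (hγ : k ≠ γ * m) : s.card ≤ 24 := by
  classical
  have hfilter (p : ℚ_[2] → Prop) [DecidablePred p] {A B : ℝ} {i j : ℤ} (hA : A ≠ 0) (hij : i ≠ j)
      (hp : ∀ x ∈ s, p x → A * ‖x‖ ^ i = B * ‖x‖ ^ j) : (s.filter p).card ≤ 8 := by
    refine card_curve_le_eight_of_norm_eq (fun x hx => hs x (Finset.mem_of_mem_filter x hx))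
      hc hm hβγ hβ hγ fun x hx y hy => ?_
    rw [Finset.mem_filter] at hx hy
    have hpow {x : ℚ_[2]} (hx : x ∈ s ∧ p x) : ‖x‖ ^ (i - j) = B / A :=
      zpow_sub_eq_div_of_mul_zpow_eq hA (norm_ne_zero_iff.mpr (hs x hx.1).1) (hp x hx.1 hx.2)
    rw [← zpow_left_inj₀ (norm_nonneg x) (norm_nonneg y) (sub_ne_zero.mpr hij), hpow hx, hpow hy]
  have hdominant {a : ℚ_[2]} {i : ℤ} {x : ℚ_[2]} (hx : x ∈ s)
      (h : ‖laurentBinomial c d β γ x‖ = ‖a * x ^ i‖) :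
      ‖a‖ ^ m * ‖x‖ ^ (i * m) = ‖e‖ * ‖x‖ ^ k := by
    rw [zpow_mul, ← mul_zpow, ← norm_zpow, ← norm_mul, ← h, ← norm_zpow, (hs x hx).2.2, norm_mul,
      norm_zpow]
  have hbalanced := hfilter (fun x => ‖c * x ^ β‖ = ‖d * x ^ γ‖) (norm_ne_zero_iff.mpr hc) hβγ
    fun x _ h => by rwa [norm_mul, norm_mul, norm_zpow, norm_zpow] at h
  have hfirst := hfilter (fun x => ‖laurentBinomial c d β γ x‖ = ‖c * x ^ β‖)
    (zpow_ne_zero m (norm_ne_zero_iff.mpr hc)) hβ.symm fun x hx h => hdominant hx h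
  have hsecond := hfilter (fun x => ‖laurentBinomial c d β γ x‖ = ‖d * x ^ γ‖)
    (zpow_ne_zero m (norm_ne_zero_iff.mpr hd)) hγ.symm fun x hx h => hdominant hx h
  have hcover : s ⊆ s.filter (fun x => ‖c * x ^ β‖ = ‖d * x ^ γ‖) ∪
      (s.filter (fun x => ‖laurentBinomial c d β γ x‖ = ‖c * x ^ β‖) ∪
        s.filter (fun x => ‖laurentBinomial c d β γ x‖ = ‖d * x ^ γ‖)) := by
    intro x hx
    simp only [Finset.mem_union, Finset.mem_filter, hx, true_and]
    exact norm_eq_norm_or_norm_add_eq _ _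
  grw [Finset.card_le_card hcover, Finset.card_union_le, Finset.card_union_le, hbalanced, hfirst,
    hsecond]

lemma card_curve_le_four_of_eq (hd : d ≠ 0) (hm : m ≠ 0) (hβγ : β ≠ γ) (hβ : k = β * m) :
    s.card ≤ 4 := by
  classical
  let ratio (x : ℚ_[2]) : ℚ_[2] := laurentBinomial c d β γ x / x ^ β
  have himage : (s.image ratio).card ≤ 2 := by
    refine card_le_two_of_zpow_eq hm (e := e) fun y hy => ?_
    obtain ⟨x, hx, rfl⟩ := Finset.mem_image.mp hy
    obtain ⟨hx0, hgx, hcurve⟩ := hs x hx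
    have hxβ := zpow_ne_zero β hx0
    refine ⟨div_ne_zero hgx hxβ, ?_⟩
    rw [div_zpow, hcurve, hβ, zpow_mul, mul_div_cancel_right₀ _ (zpow_ne_zero m hxβ)]
  have hfiber : ∀ y ∈ s.image ratio, (s.filter (ratio · = y)).card ≤ 2 := by
    refine fun y _ => card_le_two_of_zpow_eq (sub_ne_zero.mpr hβγ.symm) (e := (y - c) / d) ?_
    intro x hx
    obtain ⟨hxs, rfl⟩ := Finset.mem_filter.mp hx
    have hx0 := (hs x hxs).1
    refine ⟨hx0, zpow_sub_eq_div_of_mul_zpow_eq hd hx0 ?_⟩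
    rw [sub_mul, div_mul_cancel₀ _ (zpow_ne_zero β hx0), laurentBinomial, add_sub_cancel_left]
  have := Finset.card_le_mul_card_image s 2 hfiber
  omega

theorem card_curve_le_twentyFour (hc : c ≠ 0) (hd : d ≠ 0) (hm : m ≠ 0) (hβγ : β ≠ γ) :
    s.card ≤ 24 := by
  by_cases hβ : k = β * m
  · exact (card_curve_le_four_of_eq hs hd hm hβγ hβ).trans (by norm_num)
  by_cases hγ : k = γ * m
  · rw [← laurentBinomial_swap] at hs
    exact (card_curve_le_four_of_eq hs hc hm hβγ.symm hγ).trans (by norm_num)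
  exact card_curve_le_twentyFour_of_ne hs hc hd hm hβγ hβ hγ

end Curve

lemma binomial_eq_monomial_or {R : Type*} [Semiring R] (a b : R) (i j : ℕ) :
    (∃ e n, C a * X ^ i + C b * X ^ j = C e * X ^ n) ∨ a ≠ 0 ∧ b ≠ 0 ∧ i ≠ j := by
  obtain rfl | ha := eq_or_ne a 0
  · exact .inl ⟨b, j, by simp⟩
  obtain rfl | hb := eq_or_ne b 0
  · exact .inl ⟨a, i, by simp⟩
  obtain rfl | hij := eq_or_ne i j
  · exact .inl ⟨a + b, i, by rw [C_add, add_mul]⟩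
  · exact .inr ⟨ha, hb, hij⟩

section Roots

variable {R : Type*} [CommRing R] [IsDomain R] [DecidableEq R]

lemma toFinset_roots_mul_subset (p q : R[X]) :
    (p * q).roots.toFinset ⊆ p.roots.toFinset ∪ q.roots.toFinset := by
  obtain h | h := eq_or_ne (p * q) 0
  · simp [h]
  · rw [roots_mul h, Multiset.toFinset_add]

lemma toFinset_roots_pow_subset (p : R[X]) (n : ℕ) :
    (p ^ n).roots.toFinset ⊆ p.roots.toFinset := by
  rw [roots_pow, Multiset.toFinset_subset]
  exact fun x hx => Multiset.mem_of_mem_nsmul hx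

lemma toFinset_roots_C_mul_X_pow_subset (a : R) (n : ℕ) :
    (C a * X ^ n).roots.toFinset ⊆ {0} := by
  intro x hx
  rw [Multiset.mem_toFinset, mem_roots'] at hx
  obtain ⟨h0, hx⟩ := hx
  have ha : a ≠ 0 := fun h => h0 (by rw [h, C_0, zero_mul])
  have hxn : x ^ n = 0 := by simpa [ha] using hx
  exact Finset.mem_singleton.mpr (eq_zero_of_pow_eq_zero hxn)

end Roots

section Bracket

variable [DecidableEq ℚ_[2]]

lemma card_roots_binomial_sdiff_zero_le_two (a b : ℚ_[2]) (i j : ℕ) :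
    ((C a * X ^ i + C b * X ^ j).roots.toFinset \ {0}).card ≤ 2 := by
  obtain ⟨e, n, h⟩ | ⟨ha, -, hij⟩ := binomial_eq_monomial_or a b i j
  · rw [h, Finset.sdiff_eq_empty_iff_subset.mpr (toFinset_roots_C_mul_X_pow_subset e n)]
    exact Nat.zero_le 2
  · have hij' : (i : ℤ) - j ≠ 0 := sub_ne_zero.mpr (by exact_mod_cast hij)
    refine card_le_two_of_zpow_eq hij' (e := -b / a) fun x hx => ?_
    simp only [Finset.mem_sdiff, Multiset.mem_toFinset, mem_roots', IsRoot.def, eval_add, eval_mul,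
      eval_C, eval_pow, eval_X, Finset.mem_singleton] at hx
    obtain ⟨⟨-, hroot⟩, hx0⟩ := hx
    refine ⟨hx0, zpow_sub_eq_div_of_mul_zpow_eq ha hx0 ?_⟩
    rw [zpow_natCast, zpow_natCast]
    linear_combination hroot

lemma card_roots_bracket_sdiff_zero_le_two_of_monomial (c d e : ℚ_[2]) (n ε l μ : ℕ) :
    ((C c * (C e * X ^ n) ^ ε + C d * X ^ l * (C e * X ^ n) ^ μ).roots.toFinset \ {0}).card
      ≤ 2 := by
  have hbinomial : C c * (C e * X ^ n) ^ ε + C d * X ^ l * (C e * X ^ n) ^ μ =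
      C (c * e ^ ε) * X ^ (n * ε) + C (d * e ^ μ) * X ^ (l + n * μ) := by
    simp only [C_mul, C_pow]
    ring
  rw [hbinomial]
  exact card_roots_binomial_sdiff_zero_le_two _ _ _ _

lemma card_roots_bracket_sdiff_le_two_of_eq (c d : ℚ_[2]) (G : ℚ_[2][X]) (ε l : ℕ) :
    ((C c * G ^ ε + C d * X ^ l * G ^ ε).roots.toFinset \ insert 0 G.roots.toFinset).card
      ≤ 2 := by
  have hfactor : C c * G ^ ε + C d * X ^ l * G ^ ε = (C c * X ^ 0 + C d * X ^ l) * G ^ ε := by ring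
  have hcover : ((C c * X ^ 0 + C d * X ^ l) * G ^ ε).roots.toFinset \ insert 0 G.roots.toFinset ⊆
      (C c * X ^ 0 + C d * X ^ l).roots.toFinset \ {0} := by
    grw [toFinset_roots_mul_subset, toFinset_roots_pow_subset]
    intro x
    simp only [Finset.mem_union, Finset.mem_singleton, Finset.mem_sdiff, Finset.mem_insert]
    tauto
  grw [hfactor, hcover, card_roots_binomial_sdiff_zero_le_two]

lemma card_roots_bracket_sdiff_le_twentyFour_of_binomial {c₁ d₁ c₂ d₂ : ℚ_[2]} {β γ ε μ : ℕ} (l : ℕ)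
    (hc₁ : c₁ ≠ 0) (hd₁ : d₁ ≠ 0) (hβγ : β ≠ γ) (hc₂ : c₂ ≠ 0) (hεμ : ε ≠ μ)
    {G : ℚ_[2][X]} (hG : G = C c₁ * X ^ β + C d₁ * X ^ γ) :
    ((C c₂ * G ^ ε + C d₂ * X ^ l * G ^ μ).roots.toFinset \ insert 0 G.roots.toFinset).card
      ≤ 24 := by
  have hG0 : G ≠ 0 := fun h => hc₁ (by simpa [hG, coeff_X_pow, hβγ] using congrArg (coeff · β) h)
  have hGx (x : ℚ_[2]) : G.eval x = laurentBinomial c₁ d₁ β γ x := by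
    simp [hG, laurentBinomial]
  have hm : (ε : ℤ) - μ ≠ 0 := sub_ne_zero.mpr (by exact_mod_cast hεμ)
  have hβγ' : (β : ℤ) ≠ γ := by exact_mod_cast hβγ
  refine card_curve_le_twentyFour (e := -d₂ / c₂) (k := l) (fun x hx => ?_) hc₁ hd₁ hm hβγ'
  simp only [Finset.mem_sdiff, Multiset.mem_toFinset, mem_roots', IsRoot.def, eval_add, eval_mul,
    eval_C, eval_pow, eval_X, Finset.mem_insert, hG0, hGx, not_or, not_and, ne_eq,
    not_false_eq_true, true_imp_iff] at hx
  obtain ⟨⟨-, hroot⟩, hx0, hgx⟩ := hx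
  refine ⟨hx0, hgx, ?_⟩
  rw [div_mul_eq_mul_div, zpow_natCast]
  refine zpow_sub_eq_div_of_mul_zpow_eq hc₂ hgx ?_
  rw [zpow_natCast, zpow_natCast]
  linear_combination hroot

lemma card_roots_bracket_sdiff_le_twentyFour (c₁ d₁ c₂ d₂ : ℚ_[2]) (β γ ε l μ : ℕ)
    {G : ℚ_[2][X]} (hG : G = C c₁ * X ^ β + C d₁ * X ^ γ) :
    ((C c₂ * G ^ ε + C d₂ * X ^ l * G ^ μ).roots.toFinset \ insert 0 G.roots.toFinset).card
      ≤ 24 := by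
  obtain ⟨e, n, hmonomial⟩ | ⟨hc₁, hd₁, hβγ⟩ := binomial_eq_monomial_or c₁ d₁ β γ
  · have hzero : {0} ⊆ insert 0 G.roots.toFinset := by simp
    rw [hmonomial] at hG
    grw [← hzero, hG, card_roots_bracket_sdiff_zero_le_two_of_monomial]
    norm_num
  obtain rfl | hεμ := eq_or_ne ε μ
  · grw [card_roots_bracket_sdiff_le_two_of_eq]
    norm_num
  obtain rfl | hc₂ := eq_or_ne c₂ 0
  · grw [C_0, zero_mul, zero_add, toFinset_roots_mul_subset, toFinset_roots_C_mul_X_pow_subset,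
      toFinset_roots_pow_subset, ← Finset.insert_eq, Finset.sdiff_self]
    norm_num
  · exact card_roots_bracket_sdiff_le_twentyFour_of_binomial l hc₁ hd₁ hβγ hc₂ hεμ hG

lemma card_roots_le_twentySeven (α β γ δ ε l μ ν : ℕ) (c₁ d₁ c₂ d₂ c₃ : ℚ_[2]) :
    (C c₃ * X ^ α * (C c₁ * X ^ β + C d₁ * X ^ γ) ^ δ *
      (C c₂ * (C c₁ * X ^ β + C d₁ * X ^ γ) ^ ε +
        C d₂ * X ^ l * (C c₁ * X ^ β + C d₁ * X ^ γ) ^ μ) ^ ν).roots.toFinset.card ≤ 27 := by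
  set G : ℚ_[2][X] := C c₁ * X ^ β + C d₁ * X ^ γ with hG
  set K : ℚ_[2][X] := C c₂ * G ^ ε + C d₂ * X ^ l * G ^ μ with hK
  have hcover : (C c₃ * X ^ α * G ^ δ * K ^ ν).roots.toFinset ⊆
      {0} ∪ (G.roots.toFinset \ {0} ∪ K.roots.toFinset \ insert 0 G.roots.toFinset) := by
    grw [toFinset_roots_mul_subset, toFinset_roots_mul_subset, toFinset_roots_C_mul_X_pow_subset,
      toFinset_roots_pow_subset, toFinset_roots_pow_subset]
    intro x
    simp only [Finset.mem_union, Finset.mem_singleton, Finset.mem_sdiff, Finset.mem_insert]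
    tauto
  have hGcard : (G.roots.toFinset \ {0}).card ≤ 2 :=
    card_roots_binomial_sdiff_zero_le_two c₁ d₁ β γ
  have hKcard := card_roots_bracket_sdiff_le_twentyFour c₁ d₁ c₂ d₂ β γ ε l μ hG
  rw [← hK] at hKcard
  grw [hcover, Finset.card_union_le, Finset.card_union_le, hGcard, hKcard, Finset.card_singleton]

end Bracket

theorem twoadic_root_count_explicit_sigma_three_example_general
    (α β γ δ ε l μ ν : ℕ) (c₁ d₁ c₂ d₂ c₃ : ℚ_[2])
    (f : Polynomial ℚ_[2])
    (hfdef : f = C c₃ * X ^ α * (C c₁ * X ^ β + C d₁ * X ^ γ) ^ δ *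
        (C c₂ * (C c₁ * X ^ β + C d₁ * X ^ γ) ^ ε +
          C d₂ * X ^ l * (C c₁ * X ^ β + C d₁ * X ^ γ) ^ μ) ^ ν)
    (hf : f ≠ 0) :
    {x : ℚ_[2] | f.eval x = 0}.ncard ≤ 27 ∧
    {q : ℚ | f.eval (q : ℚ_[2]) = 0}.ncard ≤ 27 := by
  classical
  have hset : {x : ℚ_[2] | f.eval x = 0} = (f.roots.toFinset : Set ℚ_[2]) := by
    ext x; simp [hf]
  have hncard : {x : ℚ_[2] | f.eval x = 0}.ncard ≤ 27 := by
    rw [hset, Set.ncard_coe_finset, hfdef]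
    exact card_roots_le_twentySeven α β γ δ ε l μ ν c₁ d₁ c₂ d₂ c₃
  refine ⟨hncard, le_trans ?_ hncard⟩
  exact Set.ncard_le_ncard_of_injOn (fun q : ℚ => (q : ℚ_[2])) (fun _ hq => hq)
    Rat.cast_injective.injOn (hset ▸ Finset.finite_toSet _)

theorem twoadic_root_count_explicit_sigma_three_example
    (α β γ δ ε l μ ν : ℕ) (c₁ d₁ c₂ d₂ c₃ : ℚ_[2])
    (f : Polynomial ℚ_[2])
    (hfdef : f = C c₃ * X ^ α * (C c₁ * X ^ β + C d₁ * X ^ γ) ^ δ *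
        (C c₂ * (C c₁ * X ^ β + C d₁ * X ^ γ) ^ ε +
          C d₂ * X ^ l * (C c₁ * X ^ β + C d₁ * X ^ γ) ^ μ) ^ ν)
    (hf : f ≠ 0) :
    {x : ℚ_[2] | f.eval x = 0}.ncard ≤ 35 ∧
    {q : ℚ | f.eval (q : ℚ_[2]) = 0}.ncard ≤ 35 :=
  (twoadic_root_count_explicit_sigma_three_example_general α β γ δ ε l μ ν c₁ d₁ c₂ d₂ c₃ f hfdef
    hf).imp (le_trans · (by norm_num)) (le_trans · (by norm_num))
end
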